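/- Suppose Ω ⊂⊂ ℂ^m is a bounded domain with Lipschitz boundary and p ∈ ∂Ω. Then at least one of the following two (not mutually exclusive) possibilities holds: (i) there exists a connected open set Ω′ with Ω ∪ {p} ⊂ Ω′ such that every function holomorphic on Ω is the restriction of a function holomorphic on Ω′ (i.e. p lies in the envelope of holomorphy of Ω); or (ii) p lies in a local peak set for plurisubharmonic functions: there exist an open neighborhood U of p and a continuous function ρ : U ∩ cl(Ω) → ℝ such that ρ < 0 on U ∩ Ω, ρ is plurisubharmonic on U ∩ Ω, and ρ(p) = 0. -/

import Mathlib

/-!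
For `z ∈ Ω` let `R z` be the extension radius of `Ω` at `z` (`extRadius`): the infimum over all
`f` holomorphic on `Ω` of the radius of convergence at `z` of the Taylor series of `f`, capped
at `1`. Two facts about `R` carry the argument. It is `1`-Lipschitz along segments in `Ω`
(`extRadius_sub_norm_le`), by recentring power series. And `- log R` satisfies the sub-mean-value
inequality on complex discs (`neg_log_extRadius_le_circleAverage`): the functions
`log⁺ ‖D ^ n f / n!‖` are subharmonic by Jensen's formula, on the boundary circle they are at most
`n * (- log R + η)` up to a constant independent of `n`, and letting `n → ∞` in the mean value
inequality bounds the radius of convergence at the centre from below.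

A Lipschitz boundary provides near `p` a unit vector `ν` with `ball (z - ε ν) (c ε) ⊆ Ω` for all
`z ∈ closure Ω` near `p` and all small `ε > 0` (`InteriorConeAt`). If `R (p - ε ν) > ε` for some
small `ε`, the Taylor series at `p - ε ν` converge on a common ball containing `p`, and all
holomorphic functions extend.

Otherwise `R (p - ε ν) ≤ ε` for all small `ε`. The cone condition gives `R (z - ε ν) ≥ c' ε`; put
`ρ z = sup_ε (1 + log (R (z - ε ν) / (c' ε))) / log ε`. Every term is at most `1 / log ε < 0`,
while at `p` the terms are at least `const / log ε → 0`, so `ρ ≤ 0 = ρ p`. At a point of `Ω` the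
radius does not shrink with `ε`, so `ρ < 0`. The functions `z ↦ R (z - ε ν)` are Lipschitz on the
closure with a constant independent of `ε`, which gives continuity of `ρ`, and the sub-mean-value
property passes to the supremum.
-/

open Metric

/-- A bounded domain `Ω ⊆ ℂ^m` has Lipschitz boundary: near each boundary point, after a
unitary (holomorphic rotation) change of coordinates `A` and a translation `b`, `Ω` coincides
locally with the subgraph `{z : Im z_i < r z}` of a Lipschitz function `r` which does not
depend on the coordinate `Im z_i`. -/
def HasLipschitzBoundary {m : ℕ} (Ω : Set (EuclideanSpace ℂ (Fin m))) : Prop :=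
  ∀ p ∈ frontier Ω,
    ∃ (A : EuclideanSpace ℂ (Fin m) ≃ₗᵢ[ℂ] EuclideanSpace ℂ (Fin m))
      (b : EuclideanSpace ℂ (Fin m)) (C : NNReal)
      (r : EuclideanSpace ℂ (Fin m) → ℝ) (i : Fin m)
      (W : Set (EuclideanSpace ℂ (Fin m))),
      IsOpen W ∧ p ∈ W ∧ LipschitzWith C r ∧
      (∀ z w : EuclideanSpace ℂ (Fin m),
        (∀ j, j ≠ i → z j = w j) → (z i).re = (w i).re → r z = r w) ∧
      (∀ z ∈ W, z ∈ Ω ↔ ((A z + b) i).im < r (A z + b))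

/-- `ρ` is plurisubharmonic on a set `W ⊆ ℂ^m`: it is upper semicontinuous on `W` and
satisfies the sub-mean-value property along every complex line at every point of `W`. -/
def PlurisubharmonicOn {m : ℕ} (ρ : EuclideanSpace ℂ (Fin m) → ℝ)
    (W : Set (EuclideanSpace ℂ (Fin m))) : Prop :=
  UpperSemicontinuousOn ρ W ∧
  ∀ a ∈ W, ∀ w : EuclideanSpace ℂ (Fin m), ∃ T > (0 : ℝ), ∀ t : ℝ, 0 < t → t < T →
    ρ a ≤ (1 / (2 * Real.pi)) *
      ∫ θ in (0 : ℝ)..(2 * Real.pi),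
        ρ (a + ((t : ℂ) * Complex.exp ((θ : ℂ) * Complex.I)) • w)

open Filter Topology

/-! ### Osgood's theorem -/

section Osgood

variable {E F : Type*} [NormedAddCommGroup E] [NormedSpace ℂ E]
  [NormedAddCommGroup F] [NormedSpace ℂ F] {f : E → F} {U : Set E}

lemma norm_fderiv_le_of_forall_closedBall_norm_le (hU : IsOpen U) (hf : DifferentiableOn ℂ f U)
    {z : E} {s M : ℝ} (hs : 0 < s) (hz : closedBall z s ⊆ U)
    (hM : ∀ y ∈ closedBall z s, ‖f y‖ ≤ M) : ‖fderiv ℂ f z‖ ≤ M / s := by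
  have hzs := mem_closedBall_self (x := z) hs.le
  have hM0 : 0 ≤ M := (norm_nonneg _).trans (hM z hzs)
  refine ContinuousLinearMap.opNorm_le_bound _ (by positivity) fun v => ?_
  rcases eq_or_ne v 0 with rfl | hv
  · simp
  have hv' : 0 < ‖v‖ := norm_pos_iff.2 hv
  have hline : Set.MapsTo (fun l : ℂ => z + l • v) (closedBall 0 (s / ‖v‖)) (closedBall z s) := by
    intro l hl
    rw [mem_closedBall_zero_iff, le_div_iff₀ hv'] at hl
    simpa [norm_smul] using hl
  have hdiff : DifferentiableOn ℂ (fun l : ℂ => f (z + l • v)) (closure (ball 0 (s / ‖v‖))) := by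
    rw [closure_ball _ (by positivity)]
    exact hf.comp (by fun_prop) (hline.mono_right hz)
  have hcauchy : ‖lineDeriv ℂ f z v‖ ≤ M / (s / ‖v‖) :=
    Complex.norm_deriv_le_of_forall_mem_sphere_norm_le (by positivity)
      hdiff.diffContOnCl fun l hl => hM _ (hline (sphere_subset_closedBall hl))
  rw [← (hf.differentiableAt (hU.mem_nhds (hz hzs))).lineDeriv_eq_fderiv]
  exact hcauchy.trans_eq (by field_simp)

lemma fderiv_apply_eq_circleIntegral [CompleteSpace F] (hU : IsOpen U)
    (hf : DifferentiableOn ℂ f U) {x v : E} {t : ℝ} (ht : 0 < t)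
    (hx : ∀ l ∈ closedBall (0 : ℂ) t, x + l • v ∈ U) :
    fderiv ℂ f x v = (2 * Real.pi * Complex.I : ℂ)⁻¹ •
      ∮ l in C(0, t), ((l - 0) ^ 2)⁻¹ • f (x + l • v) := by
  have hxU : x ∈ U := by simpa using hx 0 (mem_closedBall_self ht.le)
  rw [← (hf.differentiableAt (hU.mem_nhds hxU)).lineDeriv_eq_fderiv]
  have hline : Differentiable ℂ fun l : ℂ => x + l • v := by fun_prop
  exact (Complex.two_pi_I_inv_smul_circleIntegral_sub_sq_inv_smul_of_differentiable
    (hU.preimage hline.continuous) hx (hf.comp hline.differentiableOn fun _ hl => hl)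
    (mem_ball_self ht)).symm

variable [FiniteDimensional ℂ E]

lemma continuousOn_fderiv_of_differentiableOn (hU : IsOpen U) (hf : DifferentiableOn ℂ f U) :
    ContinuousOn (fderiv ℂ f) U := by
  have : ProperSpace E := FiniteDimensional.proper ℂ E
  intro z hz
  refine ContinuousAt.continuousWithinAt (Metric.continuousAt_iff.2 fun ε hε => ?_)
  obtain ⟨s, hs, hball⟩ := Metric.nhds_basis_closedBall.mem_iff.1 (hU.mem_nhds hz)
  obtain ⟨δ, hδ, hδf⟩ := Metric.uniformContinuousOn_iff.1
    ((isCompact_closedBall z s).uniformContinuousOn_of_continuous (hf.continuousOn.mono hball))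
    (ε * (s / 2) / 2) (by positivity)
  refine ⟨min δ (s / 2), by positivity, fun {w} hw => ?_⟩
  obtain ⟨hwδ, hws⟩ := lt_min_iff.1 hw
  -- Cauchy's estimate at `z` for the difference of `f` and its translate by `w - z`
  have htrans : ∀ y ∈ closedBall z (s / 2), y ∈ closedBall z s ∧ y + (w - z) ∈ closedBall z s := by
    intro y hy
    rw [mem_closedBall] at hy
    have : dist (y + (w - z)) y = dist w z := by simp [dist_eq_norm]
    constructor <;> rw [mem_closedBall] <;> linarith [dist_triangle (y + (w - z)) y z]
  have hdiff : DifferentiableOn ℂ (fun y => f (y + (w - z)) - f y)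
      (U ∩ (fun y => y + (w - z)) ⁻¹' U) :=
    (hf.comp (by fun_prop) fun _ hy => hy.2).sub (hf.mono Set.inter_subset_left)
  have hcauchy := norm_fderiv_le_of_forall_closedBall_norm_le (z := z) (M := ε * (s / 2) / 2)
    (hU.inter (hU.preimage (by fun_prop))) hdiff (half_pos hs)
    (fun y hy => ⟨hball (htrans y hy).1, hball (htrans y hy).2⟩) fun y hy => by
      rw [← dist_eq_norm]
      exact (hδf _ (htrans y hy).2 _ (htrans y hy).1 (by simpa [dist_eq_norm] using hwδ)).le
  have hwU : DifferentiableAt ℂ f (z + (w - z)) := by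
    rw [add_sub_cancel]
    exact hf.differentiableAt (hU.mem_nhds (hball (by rw [mem_closedBall]; linarith)))
  rw [fderiv_fun_sub (f := fun y => f (y + (w - z))) (hwU.comp z (by fun_prop))
    (hf.differentiableAt (hU.mem_nhds hz)), fderiv_comp_add_right, add_sub_cancel] at hcauchy
  rw [dist_eq_norm]
  refine hcauchy.trans_lt ?_
  rw [div_lt_iff₀ (half_pos hs)]
  linarith [mul_pos hε (half_pos hs)]

/-- The bound on the derivative that differentiation under the integral sign needs comes from
continuity of `fderiv ℂ f` on a compact set. -/
lemma differentiableAt_circleIntegral_smul_comp (hU : IsOpen U) (hf : DifferentiableOn ℂ f U)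
    {k : ℂ → ℂ} {t : ℝ} (ht : 0 ≤ t) (hk : ContinuousOn k (sphere 0 t)) {z v : E}
    (hz : ∀ l ∈ sphere (0 : ℂ) t, z + l • v ∈ U) :
    DifferentiableAt ℂ (fun x => ∮ l in C(0, t), k l • f (x + l • v)) z := by
  have : ProperSpace E := FiniteDimensional.proper ℂ E
  have hcm : ∀ θ, circleMap 0 t θ ∈ sphere (0 : ℂ) t := circleMap_mem_sphere _ ht
  set K : Set E := (fun l : ℂ => z + l • v) '' sphere 0 t
  have hKc : IsCompact K := (isCompact_sphere 0 t).image (by fun_prop)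
  obtain ⟨δ, hδ, hKU⟩ := hKc.exists_cthickening_subset_open hU (Set.image_subset_iff.2 hz)
  have hmem : ∀ x ∈ ball z δ, ∀ θ, x + circleMap 0 t θ • v ∈ cthickening δ K := fun x hx θ =>
    mem_cthickening_of_dist_le _ _ _ _ (Set.mem_image_of_mem _ (hcm θ))
      (by simpa using (mem_ball.1 hx).le)
  have hfc := continuousOn_fderiv_of_differentiableOn hU hf
  obtain ⟨M, hM⟩ := (hKc.cthickening (r := δ)).exists_bound_of_continuousOn (hfc.mono hKU)
  set κ : ℝ → ℂ := fun θ => deriv (circleMap 0 t) θ * k (circleMap 0 t θ) with hκ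
  have hκc : Continuous κ := by
    simp only [hκ, deriv_circleMap]
    exact (by fun_prop : Continuous _).mul (hk.comp_continuous (continuous_circleMap _ _) hcm)
  have hcont : ∀ x ∈ ball z δ, Continuous fun θ => κ θ • f (x + circleMap 0 t θ • v) :=
    fun x hx => hκc.smul (hf.continuousOn.comp_continuous (by fun_prop)
      fun θ => hKU (hmem x hx θ))
  have hcont' : Continuous fun θ => κ θ • fderiv ℂ f (z + circleMap 0 t θ • v) :=
    hκc.smul (hfc.comp_continuous (by fun_prop) fun θ => hKU (hmem z (mem_ball_self hδ) θ))
  have hderiv : ∀ θ, ∀ x ∈ ball z δ, HasFDerivAt (fun x => κ θ • f (x + circleMap 0 t θ • v))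
      (κ θ • fderiv ℂ f (x + circleMap 0 t θ • v)) x := fun θ x hx =>
    ((hasFDerivAt_comp_add_right _).2
      (hf.differentiableAt (hU.mem_nhds (hKU (hmem x hx θ)))).hasFDerivAt).const_smul (κ θ)
  have hint := intervalIntegral.hasFDerivAt_integral_of_dominated_of_fderiv_le
    (μ := MeasureTheory.volume) (a := 0) (b := 2 * Real.pi) (bound := fun θ => ‖κ θ‖ * M)
    (ball_mem_nhds z hδ)
    (eventually_of_mem (ball_mem_nhds z hδ) fun x hx => (hcont x hx).aestronglyMeasurable)
    ((hcont z (mem_ball_self hδ)).intervalIntegrable _ _) hcont'.aestronglyMeasurable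
    (Eventually.of_forall fun θ _ x hx => by
      rw [norm_smul]
      exact mul_le_mul_of_nonneg_left (hM _ (hmem x hx θ)) (norm_nonneg _))
    ((hκc.norm.mul continuous_const).intervalIntegrable _ _)
    (Eventually.of_forall fun θ _ x hx => hderiv θ x hx)
  simpa only [circleIntegral, hκ, mul_smul] using hint.differentiableAt

variable [CompleteSpace F]

lemma differentiableOn_fderiv_apply (hU : IsOpen U) (hf : DifferentiableOn ℂ f U) (v : E) :
    DifferentiableOn ℂ (fun x => fderiv ℂ f x v) U := by
  intro z hz
  obtain ⟨s, hs, hball⟩ := Metric.isOpen_iff.1 hU z hz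
  obtain ⟨t, ht, htv⟩ := exists_pos_mul_lt (half_pos hs) ‖v‖
  have hdisc : ∀ x ∈ ball z (s / 2), ∀ l ∈ closedBall (0 : ℂ) t, x + l • v ∈ U := by
    intro x hx l hl
    rw [mem_closedBall_zero_iff] at hl
    have : dist (x + l • v) x ≤ ‖v‖ * t := by
      simpa [dist_eq_norm, norm_smul, mul_comm] using mul_le_mul_of_nonneg_right hl (norm_nonneg v)
    exact hball (mem_ball.2 (by linarith [mem_ball.1 hx, dist_triangle (x + l • v) x z]))
  have hk : ContinuousOn (fun l : ℂ => ((l - 0) ^ 2)⁻¹) (sphere 0 t) :=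
    ContinuousOn.inv₀ (by fun_prop) fun l hl => by
      simpa using ne_of_mem_sphere hl ht.ne'
  have hint := differentiableAt_circleIntegral_smul_comp hU hf ht.le hk
    fun l hl => hdisc z (mem_ball_self (half_pos hs)) l (sphere_subset_closedBall hl)
  refine ((hint.const_smul (2 * Real.pi * Complex.I : ℂ)⁻¹).congr_of_eventuallyEq
    ?_).differentiableWithinAt
  filter_upwards [ball_mem_nhds z (half_pos hs)] with x hx
  exact fderiv_apply_eq_circleIntegral hU hf ht (hdisc x hx)

theorem contDiffOn_of_differentiableOn_complex (hU : IsOpen U) (hf : DifferentiableOn ℂ f U)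
    (n : ℕ) : ContDiffOn ℂ n f U := by
  induction n generalizing f with
  | zero => exact contDiffOn_zero.2 hf.continuousOn
  | succ n ih =>
    push_cast
    rw [contDiffOn_succ_iff_fderiv_apply hU.uniqueDiffOn]
    refine ⟨hf, fun h => by simp at h, fun v => ?_⟩
    exact (ih (differentiableOn_fderiv_apply hU hf v)).congr fun x hx => by
      rw [fderivWithin_of_isOpen hU hx]

end Osgood

/-! ### Taylor series of holomorphic functions -/

section Taylor

variable {E F : Type*} [NormedAddCommGroup E] [NormedSpace ℂ E]
  [NormedAddCommGroup F] [NormedSpace ℂ F] {f : E → F} {U : Set E} {z : E}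

/-- The Taylor series of `f` at `z`, with the symmetric coefficients `D ^ n f (z) / n!`. -/
noncomputable def taylorAt (f : E → F) (z : E) : FormalMultilinearSeries ℂ E F :=
  fun n => (n.factorial : ℂ)⁻¹ • iteratedFDeriv ℂ n f z

lemma norm_taylorAt (f : E → F) (z : E) (n : ℕ) :
    ‖taylorAt f z n‖ = ‖iteratedFDeriv ℂ n f z‖ / n.factorial := by
  rw [taylorAt, norm_smul, norm_inv, Complex.norm_natCast, div_eq_inv_mul]

lemma taylorAt_congr {g : E → F} (h : f =ᶠ[𝓝 z] g) : taylorAt f z = taylorAt g z := by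
  funext n
  rw [taylorAt, taylorAt, (h.iteratedFDeriv ℂ n).eq_of_nhds]

lemma hasFPowerSeriesOnBall_taylorAt_sum (hr : 0 < (taylorAt f z).radius) [CompleteSpace F] :
    HasFPowerSeriesOnBall (fun y => (taylorAt f z).sum (y - z)) (taylorAt f z) z
      (taylorAt f z).radius := by
  simpa using ((taylorAt f z).hasFPowerSeriesOnBall hr).comp_sub z

/-- `D ^ n f (z)` is the sum of the `n!` permutations of the `n`-th coefficient. -/
lemma norm_taylorAt_le_of_hasFPowerSeriesOnBall [CompleteSpace F]
    {q : FormalMultilinearSeries ℂ E F} {r : ENNReal} (h : HasFPowerSeriesOnBall f q z r) (n : ℕ) :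
    ‖taylorAt f z n‖ ≤ ‖q n‖ := by
  rw [norm_taylorAt, div_le_iff₀ (by exact_mod_cast n.factorial_pos)]
  refine ContinuousMultilinearMap.opNorm_le_bound (by positivity) fun v => ?_
  have hperm : ∀ σ : Equiv.Perm (Fin n), ‖q n fun i => v (σ i)‖ ≤ ‖q n‖ * ∏ i, ‖v i‖ := fun σ => by
    simpa only [Equiv.prod_comp σ fun i => ‖v i‖] using (q n).le_opNorm fun i => v (σ i)
  calc ‖iteratedFDeriv ℂ n f z v‖ = ‖∑ σ : Equiv.Perm (Fin n), q n fun i => v (σ i)‖ := by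
        rw [h.iteratedFDeriv_eq_sum_of_completeSpace]
    _ ≤ ∑ _σ : Equiv.Perm (Fin n), ‖q n‖ * ∏ i, ‖v i‖ := norm_sum_le_of_le _ fun σ _ => hperm σ
    _ = ‖q n‖ * n.factorial * ∏ i, ‖v i‖ := by
        rw [Finset.sum_const, Finset.card_univ, Fintype.card_perm, Fintype.card_fin, nsmul_eq_mul]
        ring

variable [FiniteDimensional ℂ E] [CompleteSpace F]

lemma differentiableOn_iteratedFDeriv (hU : IsOpen U) (hf : DifferentiableOn ℂ f U) (n : ℕ) :
    DifferentiableOn ℂ (iteratedFDeriv ℂ n f) U :=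
  ((contDiffOn_of_differentiableOn_complex hU hf (n + 1)).differentiableOn_iteratedFDerivWithin
    (by exact_mod_cast n.lt_succ_self) hU.uniqueDiffOn).congr
    fun _ hx => (iteratedFDerivWithin_of_isOpen n hU hx).symm

lemma norm_iteratedFDeriv_le_of_forall_closedBall_norm_le (hU : IsOpen U)
    (hf : DifferentiableOn ℂ f U) {s M : ℝ} (hs : 0 < s) (n : ℕ) (hz : closedBall z (n * s) ⊆ U)
    (hM : ∀ y ∈ closedBall z (n * s), ‖f y‖ ≤ M) : ‖iteratedFDeriv ℂ n f z‖ ≤ M / s ^ n := by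
  induction n generalizing z with
  | zero => simpa using hM z (by simp)
  | succ n ih =>
    have hsub : ∀ y ∈ closedBall z s, closedBall y (n * s) ⊆ closedBall z ((n + 1 : ℕ) * s) :=
      fun y hy => closedBall_subset_closedBall' (by push_cast; linarith [mem_closedBall.1 hy])
    have hzs : closedBall z s ⊆ U :=
      (closedBall_subset_closedBall (by push_cast; nlinarith [n.cast_nonneg (α := ℝ)])).trans hz
    rw [← norm_fderiv_iteratedFDeriv, pow_succ, ← div_div]
    exact norm_fderiv_le_of_forall_closedBall_norm_le hU (differentiableOn_iteratedFDeriv hU hf n)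
      hs hzs fun y hy => ih ((hsub y hy).trans hz) fun x hx => hM x (hsub y hy hx)

lemma iteratedDeriv_comp_add_smul (hU : IsOpen U) (hf : DifferentiableOn ℂ f U) {v : E} (n : ℕ)
    {l : ℂ} (hl : z + l • v ∈ U) :
    iteratedDeriv n (fun l : ℂ => f (z + l • v)) l =
      iteratedFDeriv ℂ n f (z + l • v) fun _ => v := by
  have hline : ∀ l : ℂ, HasDerivAt (fun l : ℂ => z + l • v) v l := fun l => by
    simpa using ((hasDerivAt_id l).smul_const v).const_add z
  induction n generalizing l with
  | zero => simp
  | succ n ih =>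
    have hev : ∀ᶠ x in 𝓝 l, z + x • v ∈ U :=
      (hline l).continuousAt.eventually (hU.mem_nhds hl)
    rw [iteratedDeriv_succ, Filter.EventuallyEq.deriv_eq (hev.mono fun x hx => ih hx),
      iteratedFDeriv_succ_apply_left]
    have hD := ((differentiableOn_iteratedFDeriv hU hf n).differentiableAt
      (hU.mem_nhds hl)).hasFDerivAt.comp_hasDerivAt l (hline l)
    exact ((ContinuousMultilinearMap.apply ℂ (fun _ : Fin n => E) F
      fun _ => v).hasFDerivAt.comp_hasDerivAt l hD).deriv

lemma hasSum_taylorAt (hU : IsOpen U) (hf : DifferentiableOn ℂ f U) {s : ℝ} (hz : ball z s ⊆ U)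
    {y : E} (hy : ‖y‖ < s) : HasSum (fun n => taylorAt f z n fun _ => y) (f (z + y)) := by
  have hzU : z ∈ U := hz (mem_ball_self ((norm_nonneg y).trans_lt hy))
  obtain ⟨c, hc, hcy⟩ := exists_pos_mul_lt (sub_pos.2 hy) ‖y‖
  have hline : Set.MapsTo (fun l : ℂ => z + l • y) (ball 0 (1 + c)) U := fun l hl => hz <| by
    rw [mem_ball_zero_iff] at hl
    simp only [mem_ball, dist_self_add_left, norm_smul]
    nlinarith [mul_le_mul_of_nonneg_right hl.le (norm_nonneg y)]
  have hsum := Complex.hasSum_taylorSeries_on_ball (hf.comp (by fun_prop) hline) (z := 1)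
    (by simpa using hc)
  have hder := fun n => iteratedDeriv_comp_add_smul hU hf (v := y) (l := 0) n (by simpa using hzU)
  simp only [zero_smul, add_zero] at hder
  simpa [Function.comp_def, hder, taylorAt] using hsum

/-- The loss of the factor `exp 1` comes from `n ^ n / n! ≤ exp n`. -/
lemma ofReal_div_exp_one_le_radius_taylorAt (hU : IsOpen U) (hf : DifferentiableOn ℂ f U) {s : ℝ}
    (hs : 0 < s) (hz : closedBall z s ⊆ U) :
    ENNReal.ofReal (s / Real.exp 1) ≤ (taylorAt f z).radius := by
  have : ProperSpace E := FiniteDimensional.proper ℂ E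
  obtain ⟨M, hM⟩ := (isCompact_closedBall z s).exists_bound_of_continuousOn
    (hf.continuousOn.mono hz)
  have hM0 : 0 ≤ M := (norm_nonneg _).trans (hM z (mem_closedBall_self hs.le))
  refine FormalMultilinearSeries.le_radius_of_bound _ M fun n => ?_
  rw [Real.coe_toNNReal _ (by positivity), norm_taylorAt]
  rcases Nat.eq_zero_or_pos n with rfl | hn
  · simpa using hM z (mem_closedBall_self hs.le)
  have hns : (n : ℝ) * (s / n) = s := by field_simp
  have hcauchy := norm_iteratedFDeriv_le_of_forall_closedBall_norm_le hU hf (z := z) (s := s / n)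
    (M := M) (by positivity) n (by rwa [hns]) (by rwa [hns])
  have hexp : (n : ℝ) ^ n / n.factorial ≤ Real.exp 1 ^ n := by
    simpa [← Real.exp_nat_mul] using Real.pow_div_factorial_le_exp (n : ℝ) n.cast_nonneg n
  calc ‖iteratedFDeriv ℂ n f z‖ / n.factorial * (s / Real.exp 1) ^ n
      ≤ M / (s / n) ^ n / n.factorial * (s / Real.exp 1) ^ n := by gcongr
    _ = M * ((n : ℝ) ^ n / n.factorial) / Real.exp 1 ^ n := by
        rw [div_pow, div_pow]; field_simp
    _ ≤ M * Real.exp 1 ^ n / Real.exp 1 ^ n := by gcongr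
    _ = M := by field_simp

lemma hasFPowerSeriesOnBall_taylorAt (hU : IsOpen U) (hf : DifferentiableOn ℂ f U) {s : ℝ}
    (hs : 0 < s) (hz : closedBall z s ⊆ U) :
    HasFPowerSeriesOnBall f (taylorAt f z) z (ENNReal.ofReal (s / Real.exp 1)) where
  r_le := ofReal_div_exp_one_le_radius_taylorAt hU hf hs hz
  r_pos := ENNReal.ofReal_pos.2 (by positivity)
  hasSum {y} hy := by
    rw [Metric.eball_ofReal, mem_ball_zero_iff] at hy
    exact hasSum_taylorAt hU hf (ball_subset_closedBall.trans hz)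
      (hy.trans_le (div_le_self hs.le (Real.one_le_exp zero_le_one)))

theorem analyticOnNhd_of_differentiableOn (hU : IsOpen U) (hf : DifferentiableOn ℂ f U) :
    AnalyticOnNhd ℂ f U := fun z hz => by
  obtain ⟨s, hs, hball⟩ := Metric.nhds_basis_closedBall.mem_iff.1 (hU.mem_nhds hz)
  exact (hasFPowerSeriesOnBall_taylorAt hU hf hs hball).analyticAt

lemma taylorAt_sum_eventuallyEq (hU : IsOpen U) (hf : DifferentiableOn ℂ f U) (hz : z ∈ U) :
    (fun y => (taylorAt f z).sum (y - z)) =ᶠ[𝓝 z] f := by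
  obtain ⟨s, hs, hball⟩ := Metric.isOpen_iff.1 hU z hz
  filter_upwards [ball_mem_nhds z hs] with y hy
  simpa [FormalMultilinearSeries.sum] using
    (hasSum_taylorAt hU hf hball (mem_ball_iff_norm.1 hy)).tsum_eq

end Taylor

/-! ### Subharmonicity of the logarithm of the norm -/

section Subharmonic

variable {c : ℂ} {R : ℝ}

/-- By Jensen's formula: the zeros in the disc contribute nonnegative terms. -/
lemma log_norm_le_circleAverage {h : ℂ → ℂ} (hh : AnalyticOnNhd ℂ h (closedBall c R)) (hR : 0 < R)
    (hc : h c ≠ 0) : Real.log ‖h c‖ ≤ Real.circleAverage (fun ζ => Real.log ‖h ζ‖) c R := by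
  rw [← abs_of_pos hR] at hh
  rw [hh.circleAverage_log_norm hR.ne' hc, le_add_iff_nonneg_left]
  refine finsum_nonneg fun u => ?_
  by_cases hu : u ∈ closedBall c |R|
  · have hdiv := MeromorphicOn.AnalyticOnNhd.divisor_nonneg hh
    refine mul_nonneg (mod_cast hdiv u) ?_
    rcases eq_or_ne u c with rfl | huc
    · simp
    rw [mem_closedBall', dist_eq_norm, abs_of_pos hR] at hu
    have : 0 < ‖c - u‖ := norm_pos_iff.2 (sub_ne_zero.2 huc.symm)
    exact Real.log_nonneg (by rwa [← div_eq_mul_inv, one_le_div this])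
  · simp [hu]

/-- Reduction to a scalar function by a functional norming `P c`. The positive part of the
logarithm makes the junk value `log 0 = 0` at zeros harmless. -/
lemma posLog_norm_le_circleAverage {F : Type*} [NormedAddCommGroup F] [NormedSpace ℂ F]
    {P : ℂ → F} (hP : AnalyticOnNhd ℂ P (closedBall c R)) (hR : 0 < R) :
    Real.posLog ‖P c‖ ≤ Real.circleAverage (fun ζ => Real.posLog ‖P ζ‖) c R := by
  rcases le_or_gt ‖P c‖ 1 with h1 | h1
  · rw [(Real.posLog_eq_zero_iff _).2 (by simpa using h1)]
    exact Real.circleAverage_nonneg_of_nonneg fun _ _ => Real.posLog_nonneg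
  obtain ⟨φ, hφ, hφc⟩ := exists_dual_vector ℂ (P c) (zero_lt_one.trans h1).ne'
  have hh : AnalyticOnNhd ℂ (fun ζ => φ (P ζ)) (closedBall c R) := φ.comp_analyticOnNhd hP
  have hhc : ‖φ (P c)‖ = ‖P c‖ := by rw [hφc]; simp
  have hsphere : sphere c |R| ⊆ closedBall c R := by
    rw [abs_of_pos hR]; exact sphere_subset_closedBall
  calc Real.posLog ‖P c‖ = Real.log ‖φ (P c)‖ := by
        rw [hhc, Real.posLog_eq_log (by simpa using h1.le)]
    _ ≤ Real.circleAverage (fun ζ => Real.log ‖φ (P ζ)‖) c R :=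
        log_norm_le_circleAverage hh hR (norm_pos_iff.1 (by rw [hhc]; exact zero_lt_one.trans h1))
    _ ≤ Real.circleAverage (fun ζ => Real.posLog ‖P ζ‖) c R := by
        refine Real.circleAverage_mono (hh.mono hsphere).meromorphicOn.circleIntegrable_log_norm
          (ContinuousOn.circleIntegrable' ?_) fun ζ _ => ?_
        · exact Real.continuous_posLog.comp_continuousOn (hP.continuousOn.mono hsphere).norm
        · exact (le_max_right _ _).trans (Real.posLog_le_posLog (norm_nonneg _)
            (by simpa [hφ] using φ.le_opNorm (P ζ)))

lemma posLog_le_of_mul_pow_le {x ρ M : ℝ} {n : ℕ} (hx : 0 ≤ x) (hρ : 0 < ρ) (hρ1 : ρ ≤ 1)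
    (h : x * ρ ^ n ≤ M) : Real.posLog x ≤ Real.posLog M + n * -Real.log ρ := by
  have hinv : Real.posLog ρ⁻¹ = -Real.log ρ := by
    rw [Real.posLog_eq_log (by rw [abs_of_pos (inv_pos.2 hρ)]; exact (one_le_inv₀ hρ).2 hρ1),
      Real.log_inv]
  calc Real.posLog x = Real.posLog (x * ρ ^ n * ρ⁻¹ ^ n) := by
        rw [mul_assoc, ← mul_pow, mul_inv_cancel₀ hρ.ne', one_pow, mul_one]
    _ ≤ Real.posLog (x * ρ ^ n) + Real.posLog (ρ⁻¹ ^ n) := Real.posLog_mul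
    _ ≤ Real.posLog M + n * -Real.log ρ := by
        rw [Real.posLog_pow, hinv]
        gcongr

lemma circleAverage_const_add_mul {g : ℂ → ℝ} (hg : CircleIntegrable g c R) (A B : ℝ) :
    Real.circleAverage (fun ζ => A + B * g ζ) c R = A + B * Real.circleAverage g c R := by
  simp only [← smul_eq_mul]
  rw [Real.circleAverage_fun_add (circleIntegrable_const A c R) hg.const_fun_smul,
    Real.circleAverage_fun_smul, Real.circleAverage_const]

lemma circleAverage_le_const_add_mul {g u : ℂ → ℝ} (hu : CircleIntegrable u c R)
    (hg : CircleIntegrable g c R) {A B : ℝ} (h : ∀ ζ ∈ sphere c |R|, u ζ ≤ A + B * g ζ) :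
    Real.circleAverage u c R ≤ A + B * Real.circleAverage g c R :=
  (Real.circleAverage_mono hu ((circleIntegrable_const A c R).add hg.const_fun_smul) h).trans_eq
    (circleAverage_const_add_mul hg A B)

end Subharmonic

/-! ### The extension radius -/

lemma exists_nnnorm_changeOrigin_mul_pow_le {𝕜 E F : Type*} [NontriviallyNormedField 𝕜]
    [NormedAddCommGroup E] [NormedSpace 𝕜 E] [NormedAddCommGroup F] [NormedSpace 𝕜 F]
    (q : FormalMultilinearSeries 𝕜 E F) {δ r : NNReal} (h : (δ : ENNReal) + r < q.radius) :
    ∃ M : NNReal, ∀ x : E, ‖x‖₊ ≤ δ → ∀ n, ‖q.changeOrigin x n‖₊ * r ^ n ≤ M := by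
  have hδ : (δ : ENNReal) < q.radius := (le_add_right le_rfl).trans_lt h
  have hsum := (NNReal.summable_sigma.1 (q.changeOriginSeries_summable_aux₁ h)).2
  refine ⟨_, fun x hx n => le_trans ?_ (hsum.le_tsum n fun _ _ => zero_le)⟩
  have hxq : (‖x‖₊ : ENNReal) < q.radius := lt_of_le_of_lt (by exact_mod_cast hx) hδ
  simp only [NNReal.tsum_mul_right]
  gcongr
  refine (q.nnnorm_changeOrigin_le n hxq).trans ?_
  exact (q.changeOriginSeries_summable_aux₂ hxq n).tsum_le_tsum (fun s => by gcongr)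
    (q.changeOriginSeries_summable_aux₂ hδ n)

section ExtensionRadius

variable {E : Type*} [NormedAddCommGroup E] [NormedSpace ℂ E]

/-- The simultaneous extension radius of `Ω` at `z`: the infimum of the radii of convergence at
`z` of the Taylor series of all functions holomorphic on `Ω`. It is capped at `1` to make it a real
number; only radii close to `0` matter. -/
noncomputable def extRadius (Ω : Set E) (z : E) : ℝ :=
  (min 1 (⨅ f : {f : E → ℂ // DifferentiableOn ℂ f Ω}, (taylorAt f.1 z).radius)).toReal

variable {Ω : Set E} {f : E → ℂ} {z z' : E} {r : ℝ}

lemma extRadius_nonneg (Ω : Set E) (z : E) : 0 ≤ extRadius Ω z := ENNReal.toReal_nonneg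

lemma ofReal_extRadius (Ω : Set E) (z : E) : ENNReal.ofReal (extRadius Ω z) =
    min 1 (⨅ f : {f : E → ℂ // DifferentiableOn ℂ f Ω}, (taylorAt f.1 z).radius) :=
  ENNReal.ofReal_toReal (ne_top_of_le_ne_top ENNReal.one_ne_top (min_le_left _ _))

lemma extRadius_le_one (Ω : Set E) (z : E) : extRadius Ω z ≤ 1 := by
  rw [← ENNReal.ofReal_le_one, ofReal_extRadius]
  exact min_le_left _ _

lemma ofReal_extRadius_le (hf : DifferentiableOn ℂ f Ω) (z : E) :
    ENNReal.ofReal (extRadius Ω z) ≤ (taylorAt f z).radius := by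
  rw [ofReal_extRadius]
  exact (min_le_right _ _).trans
    (iInf_le (fun f : {f : E → ℂ // DifferentiableOn ℂ f Ω} => (taylorAt f.1 z).radius) ⟨f, hf⟩)

lemma le_extRadius (hr : r ≤ 1)
    (h : ∀ f : E → ℂ, DifferentiableOn ℂ f Ω → ENNReal.ofReal r ≤ (taylorAt f z).radius) :
    r ≤ extRadius Ω z := by
  rw [← ENNReal.ofReal_le_ofReal_iff (extRadius_nonneg Ω z), ofReal_extRadius]
  exact le_min (ENNReal.ofReal_le_one.2 hr) (le_iInf fun f => h f.1 f.2)

lemma analyticOnNhd_taylorAt_sum (hr : 0 < r) (h : ENNReal.ofReal r ≤ (taylorAt f z).radius) :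
    AnalyticOnNhd ℂ (fun y => (taylorAt f z).sum (y - z)) (ball z r) := by
  rw [← Metric.eball_ofReal]
  exact (hasFPowerSeriesOnBall_taylorAt_sum
    ((ENNReal.ofReal_pos.2 hr).trans_le h)).analyticOnNhd.mono (Metric.eball_subset_eball h)

lemma eventuallyEq_of_segment_subset {F : Type*} [NormedAddCommGroup F] [NormedSpace ℂ F]
    {f g : E → F} {V : Set E} (hV : IsOpen V) (hf : AnalyticOnNhd ℂ f V)
    (hg : AnalyticOnNhd ℂ g V) (hseg : segment ℝ z z' ⊆ V) (h : f =ᶠ[𝓝 z] g) :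
    f =ᶠ[𝓝 z'] g := by
  have hc : IsCompact (segment ℝ z z') := by
    rw [segment_eq_image_lineMap]
    exact isCompact_Icc.image (by fun_prop)
  obtain ⟨δ, hδ, hsub⟩ := hc.exists_thickening_subset_open hV hseg
  have hmem := self_subset_thickening hδ (segment ℝ z z')
  have hEq := (hf.mono hsub).eqOn_of_preconnected_of_eventuallyEq (hg.mono hsub)
    ((convex_segment z z').thickening δ).isPreconnected (hmem (left_mem_segment ℝ z z')) h
  exact hEq.eventuallyEq_of_mem
    (isOpen_thickening.mem_nhds (hmem (right_mem_segment ℝ z z')))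

variable [FiniteDimensional ℂ E]

lemma div_exp_one_le_extRadius (hΩ : IsOpen Ω) {s : ℝ} (hs : 0 < s) (hs1 : s ≤ 1)
    (hz : closedBall z s ⊆ Ω) : s / Real.exp 1 ≤ extRadius Ω z :=
  le_extRadius ((div_le_self hs.le (Real.one_le_exp zero_le_one)).trans hs1)
    fun _ hf => ofReal_div_exp_one_le_radius_taylorAt hΩ hf hs hz

lemma extRadius_pos (hΩ : IsOpen Ω) (hz : z ∈ Ω) : 0 < extRadius Ω z := by
  obtain ⟨s, hs, hball⟩ := Metric.nhds_basis_closedBall.mem_iff.1 (hΩ.mem_nhds hz)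
  have hs1 : 0 < min s 1 := lt_min hs one_pos
  exact (by positivity : 0 < min s 1 / Real.exp 1).trans_le <|
    div_exp_one_le_extRadius hΩ hs1 (min_le_right _ _)
      ((closedBall_subset_closedBall (min_le_left _ _)).trans hball)

lemma taylorAt_sum_eventuallyEq_of_segment (hΩ : IsOpen Ω) (hf : DifferentiableOn ℂ f Ω)
    (hr : 0 < r) (h : ENNReal.ofReal r ≤ (taylorAt f z).radius) {x y : E}
    (hseg : segment ℝ x y ⊆ Ω) (hx : x ∈ ball z r) (hy : y ∈ ball z r)
    (hxf : (fun y => (taylorAt f z).sum (y - z)) =ᶠ[𝓝 x] f) :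
    (fun y => (taylorAt f z).sum (y - z)) =ᶠ[𝓝 y] f :=
  eventuallyEq_of_segment_subset (hΩ.inter isOpen_ball)
    ((analyticOnNhd_taylorAt_sum hr h).mono Set.inter_subset_right)
    ((analyticOnNhd_of_differentiableOn hΩ hf).mono Set.inter_subset_left)
    (Set.subset_inter hseg ((convex_ball z r).segment_subset hx hy)) hxf

lemma norm_taylorAt_le_norm_changeOrigin (hΩ : IsOpen Ω) (hf : DifferentiableOn ℂ f Ω)
    (h : ENNReal.ofReal r ≤ (taylorAt f z).radius) (hseg : segment ℝ z z' ⊆ Ω)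
    (hz' : ‖z' - z‖ < r) (n : ℕ) :
    ‖taylorAt f z' n‖ ≤ ‖(taylorAt f z).changeOrigin (z' - z) n‖ := by
  have hr : 0 < r := (norm_nonneg _).trans_lt hz'
  have hev := taylorAt_sum_eventuallyEq_of_segment hΩ hf hr h hseg (mem_ball_self hr)
    (mem_ball_iff_norm.2 hz')
    (taylorAt_sum_eventuallyEq hΩ hf (hseg (left_mem_segment ℝ z z')))
  have hlt : (‖z' - z‖₊ : ENNReal) < (taylorAt f z).radius := by
    rw [← enorm_eq_nnnorm, ← ofReal_norm]
    exact ((ENNReal.ofReal_lt_ofReal_iff hr).2 hz').trans_le h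
  have hseries := (hasFPowerSeriesOnBall_taylorAt_sum (f := f) (z := z)
    (zero_le.trans_lt hlt)).changeOrigin hlt
  rw [add_sub_cancel] at hseries
  rw [← taylorAt_congr hev]
  exact norm_taylorAt_le_of_hasFPowerSeriesOnBall hseries n

lemma extRadius_sub_norm_le (hΩ : IsOpen Ω) (hseg : segment ℝ z z' ⊆ Ω) :
    extRadius Ω z - ‖z' - z‖ ≤ extRadius Ω z' := by
  rcases le_or_gt (extRadius Ω z) ‖z' - z‖ with h | h
  · linarith [extRadius_nonneg Ω z']
  refine le_extRadius (by linarith [extRadius_le_one Ω z, norm_nonneg (z' - z)]) fun f hf => ?_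
  have hR := ofReal_extRadius_le hf z
  calc ENNReal.ofReal (extRadius Ω z - ‖z' - z‖)
      = ENNReal.ofReal (extRadius Ω z) - ‖z' - z‖₊ := by
        rw [ENNReal.ofReal_sub _ (norm_nonneg _), ofReal_norm, enorm_eq_nnnorm]
    _ ≤ (taylorAt f z).radius - ‖z' - z‖₊ := by gcongr
    _ ≤ ((taylorAt f z).changeOrigin (z' - z)).radius :=
        FormalMultilinearSeries.changeOrigin_radius _
    _ ≤ (taylorAt f z').radius := FormalMultilinearSeries.radius_le_of_le
        (norm_taylorAt_le_norm_changeOrigin hΩ hf hR hseg h)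

lemma continuousOn_extRadius (hΩ : IsOpen Ω) : ContinuousOn (extRadius Ω) Ω := by
  intro z hz
  obtain ⟨s, hs, hball⟩ := Metric.isOpen_iff.1 hΩ z hz
  have hseg := fun x hx y hy =>
    ((convex_ball z s).segment_subset (x := x) (y := y) hx hy).trans hball
  have hlip : LipschitzOnWith 1 (extRadius Ω) (ball z s) :=
    LipschitzOnWith.of_le_add fun x hx y hy => by
      have := extRadius_sub_norm_le hΩ (hseg x hx y hy)
      rw [dist_eq_norm']
      linarith
  exact (hlip.continuousOn.continuousAt (ball_mem_nhds z hs)).continuousWithinAt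

lemma exists_eventually_norm_taylorAt_mul_pow_le (hΩ : IsOpen Ω) (hf : DifferentiableOn ℂ f Ω)
    (hz : z ∈ Ω) {r : NNReal} (hr : (r : ENNReal) < (taylorAt f z).radius) :
    ∃ M : ℝ, ∀ᶠ y in 𝓝 z, ∀ n, ‖taylorAt f y n‖ * (r : ℝ) ^ n ≤ M := by
  obtain ⟨s, hs, hball⟩ := Metric.isOpen_iff.1 hΩ z hz
  obtain ⟨δ, hδ, hδr⟩ := ENNReal.lt_iff_exists_add_pos_lt.1 hr
  rw [add_comm] at hδr
  obtain ⟨M, hM⟩ := exists_nnnorm_changeOrigin_mul_pow_le (taylorAt f z) hδr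
  have hδz : ENNReal.ofReal δ ≤ (taylorAt f z).radius := by
    rw [ENNReal.ofReal_coe_nnreal]
    exact (le_add_right le_rfl).trans hδr.le
  refine ⟨M, ?_⟩
  filter_upwards [ball_mem_nhds z hs, ball_mem_nhds z (NNReal.coe_pos.2 hδ)] with y hys hyδ n
  have hyδ' := mem_ball_iff_norm.1 hyδ
  have hseg := ((convex_ball z s).segment_subset (mem_ball_self hs) hys).trans hball
  calc ‖taylorAt f y n‖ * (r : ℝ) ^ n
      ≤ ‖(taylorAt f z).changeOrigin (y - z) n‖ * (r : ℝ) ^ n := by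
        gcongr; exact norm_taylorAt_le_norm_changeOrigin hΩ hf hδz hseg hyδ' n
    _ ≤ M := by exact_mod_cast hM (y - z) hyδ'.le n

lemma exists_eventually_norm_taylorAt_mul_extRadius_pow_le (hΩ : IsOpen Ω)
    (hf : DifferentiableOn ℂ f Ω) (hz : z ∈ Ω) {κ : ℝ} (hκ : 0 < κ) (hκ1 : κ < 1) :
    ∃ M : ℝ, ∀ᶠ y in 𝓝 z, ∀ n, ‖taylorAt f y n‖ * (κ * extRadius Ω y) ^ n ≤ M := by
  have hR := extRadius_pos hΩ hz
  obtain ⟨r, hr, hrR⟩ := exists_between (mul_lt_of_lt_one_left hR hκ1)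
  have hr0 : 0 < r := (mul_pos hκ hR).trans hr
  obtain ⟨M, hM⟩ := exists_eventually_norm_taylorAt_mul_pow_le hΩ hf hz (r := r.toNNReal)
    (((ENNReal.ofReal_lt_ofReal_iff hR).2 hrR).trans_le (ofReal_extRadius_le hf z))
  rw [Real.coe_toNNReal _ hr0.le] at hM
  have hcont : ContinuousAt (fun y => κ * extRadius Ω y) z :=
    ((continuousOn_extRadius hΩ).continuousAt (hΩ.mem_nhds hz)).const_mul _
  refine ⟨M, ?_⟩
  filter_upwards [hM, hcont.eventually_lt_const hr] with y hyM hyr n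
  refine (mul_le_mul_of_nonneg_left ?_ (norm_nonneg _)).trans (hyM n)
  exact pow_le_pow_left₀ (mul_nonneg hκ.le (extRadius_nonneg Ω y)) hyr.le n

lemma exists_norm_taylorAt_mul_extRadius_pow_le_of_isCompact (hΩ : IsOpen Ω)
    (hf : DifferentiableOn ℂ f Ω) {K : Set E} (hK : IsCompact K) (hKΩ : K ⊆ Ω) {κ : ℝ}
    (hκ : 0 < κ) (hκ1 : κ < 1) :
    ∃ M : ℝ, ∀ z ∈ K, ∀ n, ‖taylorAt f z n‖ * (κ * extRadius Ω z) ^ n ≤ M := by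
  refine hK.induction_on (p := fun S => ∃ M : ℝ, ∀ z ∈ S, ∀ n,
    ‖taylorAt f z n‖ * (κ * extRadius Ω z) ^ n ≤ M) ⟨0, by simp⟩ ?_ ?_ fun z hz => ?_
  · exact fun S T hST ⟨M, hM⟩ => ⟨M, fun z hz => hM z (hST hz)⟩
  · exact fun S T ⟨M, hM⟩ ⟨N, hN⟩ => ⟨max M N, fun z hz n => hz.elim
      (fun h => (hM z h n).trans (le_max_left _ _)) fun h => (hN z h n).trans (le_max_right _ _)⟩
  · obtain ⟨M, hM⟩ :=
      exists_eventually_norm_taylorAt_mul_extRadius_pow_le hΩ hf (hKΩ hz) hκ hκ1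
    exact ⟨_, mem_nhdsWithin_of_mem_nhds hM, M, fun y hy => hy⟩

lemma circleIntegrable_neg_log_extRadius (hΩ : IsOpen Ω) {a w : E} {t : ℝ}
    (hcircle : ∀ ζ ∈ sphere (0 : ℂ) |t|, a + ζ • w ∈ Ω) :
    CircleIntegrable (fun ζ => -Real.log (extRadius Ω (a + ζ • w))) 0 t :=
  ContinuousOn.circleIntegrable' <| ContinuousOn.neg <|
    ((continuousOn_extRadius hΩ).comp (by fun_prop) hcircle).log
      fun ζ hζ => (extRadius_pos hΩ (hcircle ζ hζ)).ne'

lemma analyticOnNhd_taylorAt_add_smul (hΩ : IsOpen Ω) (hf : DifferentiableOn ℂ f Ω) (a w : E)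
    (n : ℕ) :
    AnalyticOnNhd ℂ (fun ζ : ℂ => taylorAt f (a + ζ • w) n) {ζ | a + ζ • w ∈ Ω} :=
  (((differentiableOn_iteratedFDeriv hΩ hf n).const_smul (n.factorial : ℂ)⁻¹).comp
    (by fun_prop : Differentiable ℂ fun ζ : ℂ => a + ζ • w).differentiableOn
    fun _ hζ => hζ).analyticOnNhd (hΩ.preimage (by fun_prop))

/-- The subharmonic function `ζ ↦ log⁺ ‖P ζ‖`, where `P ζ` is the `n`-th Taylor coefficient at
`a + ζ • w`, is at most `n * (- log (extRadius Ω (a + ζ • w)) + η)` up to a constant. -/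
lemma exists_norm_taylorAt_le_exp_circleAverage (hΩ : IsOpen Ω) (hf : DifferentiableOn ℂ f Ω)
    {a w : E} {t η : ℝ} (ht : 0 < t) (hη : 0 < η)
    (hdisc : ∀ ζ ∈ closedBall (0 : ℂ) t, a + ζ • w ∈ Ω) :
    ∃ M : ℝ, ∀ n : ℕ, ‖taylorAt f a n‖ ≤ M * Real.exp
      (Real.circleAverage (fun ζ => -Real.log (extRadius Ω (a + ζ • w))) 0 t + η) ^ n := by
  have hsub : sphere (0 : ℂ) |t| ⊆ closedBall 0 t := by
    rw [abs_of_pos ht]; exact sphere_subset_closedBall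
  have hcircle : ∀ ζ ∈ sphere (0 : ℂ) |t|, a + ζ • w ∈ Ω := fun ζ hζ => hdisc ζ (hsub hζ)
  obtain ⟨M, hM⟩ := exists_norm_taylorAt_mul_extRadius_pow_le_of_isCompact hΩ hf
    ((isCompact_sphere (0 : ℂ) |t|).image (by fun_prop : Continuous fun ζ : ℂ => a + ζ • w))
    (Set.image_subset_iff.2 hcircle)
    (Real.exp_pos (-η)) (Real.exp_lt_one_iff.2 (neg_lt_zero.2 hη))
  set g : ℂ → ℝ := fun ζ => -Real.log (extRadius Ω (a + ζ • w))
  refine ⟨Real.exp (Real.posLog M), fun n => ?_⟩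
  have hP := (analyticOnNhd_taylorAt_add_smul hΩ hf a w n).mono hdisc
  have hle : ∀ ζ ∈ sphere (0 : ℂ) |t|,
      Real.posLog ‖taylorAt f (a + ζ • w) n‖ ≤ (Real.posLog M + n * η) + n * g ζ := by
    intro ζ hζ
    have hR := extRadius_pos hΩ (hcircle ζ hζ)
    have h := posLog_le_of_mul_pow_le (norm_nonneg _) (mul_pos (Real.exp_pos (-η)) hR)
      (mul_le_one₀ (Real.exp_le_one_iff.2 (by linarith)) hR.le (extRadius_le_one _ _))
      (hM _ (Set.mem_image_of_mem _ hζ) n)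
    rw [Real.log_mul (Real.exp_pos _).ne' hR.ne', Real.log_exp] at h
    exact h.trans_eq (by ring)
  have hmean : Real.posLog ‖taylorAt f a n‖ ≤
      (Real.posLog M + n * η) + n * Real.circleAverage g 0 t := by
    have hP0 := posLog_norm_le_circleAverage hP ht
    rw [zero_smul, add_zero] at hP0
    refine hP0.trans (circleAverage_le_const_add_mul ?_
      (circleIntegrable_neg_log_extRadius hΩ hcircle) hle)
    exact ContinuousOn.circleIntegrable'
      (Real.continuous_posLog.comp_continuousOn (hP.continuousOn.mono hsub).norm)
  calc ‖taylorAt f a n‖ ≤ Real.exp (Real.log ‖taylorAt f a n‖) := Real.le_exp_log _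
    _ ≤ Real.exp (Real.posLog M + n * (Real.circleAverage g 0 t + η)) :=
        Real.exp_le_exp.2 (((le_max_right _ _).trans hmean).trans_eq (by ring))
    _ = Real.exp (Real.posLog M) * Real.exp (Real.circleAverage g 0 t + η) ^ n := by
        rw [Real.exp_add, Real.exp_nat_mul]

theorem neg_log_extRadius_le_circleAverage (hΩ : IsOpen Ω) {a w : E} {t : ℝ} (ht : 0 < t)
    (hdisc : ∀ ζ ∈ closedBall (0 : ℂ) t, a + ζ • w ∈ Ω) :
    -Real.log (extRadius Ω a) ≤
      Real.circleAverage (fun ζ => -Real.log (extRadius Ω (a + ζ • w))) 0 t := by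
  set A := Real.circleAverage (fun ζ => -Real.log (extRadius Ω (a + ζ • w))) 0 t
  have hA : 0 ≤ A := Real.circleAverage_nonneg_of_nonneg fun _ _ =>
    neg_nonneg.2 (Real.log_nonpos (extRadius_nonneg _ _) (extRadius_le_one _ _))
  refine le_of_forall_pos_le_add fun η hη => ?_
  suffices h : Real.exp (-(A + η)) ≤ extRadius Ω a by
    rw [neg_le]
    simpa using Real.log_le_log (Real.exp_pos _) h
  refine le_extRadius (Real.exp_le_one_iff.2 (by linarith)) fun f hf => ?_
  obtain ⟨M, hM⟩ := exists_norm_taylorAt_le_exp_circleAverage hΩ hf ht hη hdisc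
  refine FormalMultilinearSeries.le_radius_of_bound _ M fun n => ?_
  rw [Real.coe_toNNReal _ (Real.exp_pos _).le, Real.exp_neg, inv_pow, ← div_eq_mul_inv]
  exact (div_le_iff₀ (by positivity)).2 (hM n)

end ExtensionRadius

/-! ### Suprema of normalized logarithms -/

section PeakFunction

/-- The logarithm of the ratio of a radius `r` to `c * ε`, the least radius allowed at depth `ε`,
divided by `log ε`. For `0 < ε < 1` and `c * ε ≤ r` it is negative; the summand `1` keeps it so
when `r = c * ε`. -/
noncomputable def depthLog (c ε r : ℝ) : ℝ := (1 + Real.log (r / (c * ε))) / Real.log ε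

variable {c ε r r' : ℝ}

lemma depthLog_eq_const_add_mul (hc : 0 < c) (hε : 0 < ε) (hr : 0 < r) : depthLog c ε r =
    (1 - Real.log (c * ε)) / Real.log ε + -(Real.log ε)⁻¹ * -Real.log r := by
  rw [depthLog, Real.log_div hr.ne' (mul_pos hc hε).ne']
  ring

lemma depthLog_le_depthLog (hc : 0 < c) (hε : 0 < ε) (hε1 : ε ≤ 1) (hr : 0 < r) (h : r ≤ r') :
    depthLog c ε r' ≤ depthLog c ε r :=
  div_le_div_of_nonpos_of_le (Real.log_nonpos hε.le hε1)
    (by have := mul_pos hc hε; gcongr)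

lemma depthLog_le_inv_log (hc : 0 < c) (hε : 0 < ε) (hε1 : ε ≤ 1) (h : c * ε ≤ r) :
    depthLog c ε r ≤ (Real.log ε)⁻¹ := by
  have hcε := mul_pos hc hε
  refine (depthLog_le_depthLog hc hε hε1 hcε h).trans_eq ?_
  rw [depthLog, div_self hcε.ne', Real.log_one, add_zero, one_div]

lemma depthLog_le_depthLog_add (hc : 0 < c) (hε : 0 < ε) (hlog : Real.log ε ≤ -1) {κ : ℝ}
    (hκ : 0 < κ) (hr : κ ≤ r) (hr' : 0 < r') :
    depthLog c ε r ≤ depthLog c ε r' + |r' - r| / κ := by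
  have hr0 := hκ.trans_le hr
  have hdiff : Real.log r' - Real.log r ≤ |r' - r| / κ :=
    calc Real.log r' - Real.log r = Real.log (r' / r) := (Real.log_div hr'.ne' hr0.ne').symm
      _ ≤ r' / r - 1 := Real.log_le_sub_one_of_pos (div_pos hr' hr0)
      _ = (r' - r) / r := by rw [sub_div, div_self hr0.ne']
      _ ≤ |r' - r| / κ := div_le_div₀ (abs_nonneg _) (le_abs_self _) hκ hr
  have hinv : -(Real.log ε)⁻¹ ≤ 1 := by
    rw [← inv_neg]
    exact inv_le_one_of_one_le₀ (by linarith)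
  have hinv0 : 0 ≤ -(Real.log ε)⁻¹ := neg_nonneg.2 (inv_nonpos.2 (by linarith))
  rw [depthLog_eq_const_add_mul hc hε hr0, depthLog_eq_const_add_mul hc hε hr']
  nlinarith [mul_le_mul_of_nonneg_left hdiff hinv0,
    mul_le_mul_of_nonneg_right hinv (div_nonneg (abs_nonneg (r' - r)) hκ.le)]

lemma exists_neg_forall_depthLog_le (hc : 0 < c) {κ : ℝ} (hκ : 0 < κ) :
    ∃ b < 0, ∀ ε r : ℝ, 0 < ε → Real.log ε < 0 → c * ε ≤ r → κ ≤ r → depthLog c ε r ≤ b := by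
  set M := |Real.log (κ / c)|
  have hM : 0 ≤ M := abs_nonneg _
  refine ⟨-(1 + M)⁻¹, neg_lt_zero.2 (by positivity), fun ε r hε hlog hr hκr => ?_⟩
  have hcε := mul_pos hc hε
  have h1 : 0 ≤ Real.log (r / (c * ε)) := Real.log_nonneg ((one_le_div hcε).2 hr)
  have h2 : -M - Real.log ε ≤ Real.log (r / (c * ε)) :=
    calc -M - Real.log ε ≤ Real.log (κ / c) - Real.log ε :=
          sub_le_sub_right (neg_abs_le _) _
      _ = Real.log (κ / (c * ε)) := by
        rw [← Real.log_div (div_pos hκ hc).ne' hε.ne', div_div]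
      _ ≤ Real.log (r / (c * ε)) := by gcongr
  rw [depthLog, div_le_iff_of_neg hlog, neg_mul, ← div_eq_inv_mul, ← neg_div,
    div_le_iff₀ (by positivity)]
  nlinarith

variable {X : Type*}

/-- The supremum over all depths `ε < ε₀` of the normalized logarithms of the radii `u ε z`. -/
noncomputable def peakFn (c ε₀ : ℝ) (u : ℝ → X → ℝ) (z : X) : ℝ :=
  ⨆ ε : Set.Ioo (0 : ℝ) ε₀, depthLog c ε (u ε z)

variable [PseudoMetricSpace X]

/-- A family of radii `u ε z`, one at each depth `ε < ε₀` below each point `z` of `S`, which are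
at least proportional to the depth and depend in a Lipschitz way on the point (uniformly in the
depth) and on the depth. -/
structure DepthFamily (S : Set X) (c : ℝ) (K : NNReal) (ε₀ : ℝ) (u : ℝ → X → ℝ) : Prop where
  c_pos : 0 < c
  eps_pos : 0 < ε₀
  eps_le : ε₀ ≤ Real.exp (-1)
  lower : ∀ ε ∈ Set.Ioo 0 ε₀, ∀ z ∈ S, c * ε ≤ u ε z
  lipschitzOnWith : ∀ ε ∈ Set.Ioo 0 ε₀, LipschitzOnWith K (u ε) S
  lipschitzOnWith_depth : ∀ z ∈ S, LipschitzOnWith 1 (fun ε => u ε z) (Set.Ioo 0 ε₀)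

namespace DepthFamily

variable {S : Set X} {K : NNReal} {ε₀ b κ : ℝ} {u : ℝ → X → ℝ} {z : X}

lemma log_le_neg_one (h : DepthFamily S c K ε₀ u) (hε : ε ∈ Set.Ioo 0 ε₀) : Real.log ε ≤ -1 :=
  (Real.log_le_iff_le_exp hε.1).2 (hε.2.le.trans h.eps_le)

lemma le_one (h : DepthFamily S c K ε₀ u) (hε : ε ∈ Set.Ioo 0 ε₀) : ε ≤ 1 :=
  (hε.2.le.trans h.eps_le).trans (Real.exp_le_one_iff.2 (by norm_num))

lemma pos (h : DepthFamily S c K ε₀ u) (hε : ε ∈ Set.Ioo 0 ε₀) (hz : z ∈ S) : 0 < u ε z :=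
  (mul_pos h.c_pos hε.1).trans_le (h.lower ε hε z hz)

lemma depthLog_neg (h : DepthFamily S c K ε₀ u) (hε : ε ∈ Set.Ioo 0 ε₀) (hz : z ∈ S) :
    depthLog c ε (u ε z) < 0 :=
  (depthLog_le_inv_log h.c_pos hε.1 (h.le_one hε) (h.lower ε hε z hz)).trans_lt
    (inv_lt_zero.2 (by linarith [h.log_le_neg_one hε]))

lemma le_peakFn (h : DepthFamily S c K ε₀ u) (hε : ε ∈ Set.Ioo 0 ε₀) (hz : z ∈ S) :
    depthLog c ε (u ε z) ≤ peakFn c ε₀ u z := by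
  refine le_ciSup (f := fun ε : Set.Ioo (0 : ℝ) ε₀ => depthLog c ε (u ε z)) ⟨0, ?_⟩ ⟨ε, hε⟩
  rintro _ ⟨ε, rfl⟩
  exact (h.depthLog_neg ε.2 hz).le

lemma peakFn_le (h : DepthFamily S c K ε₀ u)
    (hb : ∀ ε ∈ Set.Ioo 0 ε₀, depthLog c ε (u ε z) ≤ b) : peakFn c ε₀ u z ≤ b :=
  have := Set.nonempty_Ioo_subtype h.eps_pos
  ciSup_le fun ε => hb ε ε.2

lemma peakFn_nonpos (h : DepthFamily S c K ε₀ u) (hz : z ∈ S) : peakFn c ε₀ u z ≤ 0 :=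
  h.peakFn_le fun _ hε => (h.depthLog_neg hε hz).le

lemma peakFn_eq_zero (h : DepthFamily S c K ε₀ u) (hz : z ∈ S)
    (hu : ∀ ε ∈ Set.Ioo 0 ε₀, u ε z ≤ ε) : peakFn c ε₀ u z = 0 := by
  refine le_antisymm (h.peakFn_nonpos hz) ?_
  have hlim : Tendsto (fun ε : ℝ => (1 + Real.log (1 / c)) / Real.log ε) (𝓝[>] 0) (𝓝 0) :=
    Real.tendsto_log_nhdsGT_zero.const_div_atBot _
  refine le_of_tendsto hlim ?_
  filter_upwards [Ioo_mem_nhdsGT h.eps_pos] with ε hε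
  calc (1 + Real.log (1 / c)) / Real.log ε = depthLog c ε ε := by
        rw [depthLog, mul_comm c ε, ← div_div, div_self hε.1.ne']
    _ ≤ depthLog c ε (u ε z) :=
        depthLog_le_depthLog h.c_pos hε.1 (h.le_one hε) (h.pos hε hz) (hu ε hε)
    _ ≤ peakFn c ε₀ u z := h.le_peakFn hε hz

lemma exists_pos_eventually_forall_le (h : DepthFamily S c K ε₀ u) (hz : z ∈ S)
    (hε : ε ∈ Set.Ioo 0 ε₀) (hu : ε < u ε z) :
    ∃ κ > 0, ∀ᶠ y in 𝓝[S] z, ∀ ε' ∈ Set.Ioo 0 ε₀, κ ≤ u ε' y := by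
  obtain ⟨s, hεs, hsu⟩ := exists_between hu
  refine ⟨min (s - ε) (c * ε), lt_min (sub_pos.2 hεs) (mul_pos h.c_pos hε.1), ?_⟩
  filter_upwards [((h.lipschitzOnWith ε hε).continuousOn z hz).eventually_const_lt hsu,
    self_mem_nhdsWithin] with y hy hyS ε' hε'
  rcases le_or_gt ε' ε with hle | hlt
  · have hdepth := (h.lipschitzOnWith_depth y hyS).le_add_mul hε hε'
    rw [NNReal.coe_one, one_mul, Real.dist_eq, abs_of_nonneg (sub_nonneg.2 hle)] at hdepth
    exact (min_le_left _ _).trans (by linarith [hε'.1])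
  · exact (min_le_right _ _).trans
      ((mul_le_mul_of_nonneg_left hlt.le h.c_pos.le).trans (h.lower ε' hε' y hyS))

lemma peakFn_neg (h : DepthFamily S c K ε₀ u) (hz : z ∈ S) (hε : ε ∈ Set.Ioo 0 ε₀)
    (hu : ε < u ε z) : peakFn c ε₀ u z < 0 := by
  obtain ⟨κ, hκ, hev⟩ := h.exists_pos_eventually_forall_le hz hε hu
  obtain ⟨b, hb, hle⟩ := exists_neg_forall_depthLog_le h.c_pos hκ
  exact (h.peakFn_le fun ε' hε' => hle ε' _ hε'.1 (by linarith [h.log_le_neg_one hε'])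
    (h.lower ε' hε' z hz) (hev.self_of_nhdsWithin hz ε' hε')).trans_lt hb

lemma continuousOn_depthLog (h : DepthFamily S c K ε₀ u) (hε : ε ∈ Set.Ioo 0 ε₀) :
    ContinuousOn (fun z => depthLog c ε (u ε z)) S :=
  (continuousOn_const.add (((h.lipschitzOnWith ε hε).continuousOn.div_const _).log fun _ hz =>
    (div_pos (h.pos hε hz) (mul_pos h.c_pos hε.1)).ne')).div_const _

lemma lipschitzOnWith_peakFn (h : DepthFamily S c K ε₀ u) (hκ : 0 < κ) :
    LipschitzOnWith (K / κ.toNNReal) (peakFn c ε₀ u)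
      {z ∈ S | ∀ ε ∈ Set.Ioo 0 ε₀, κ ≤ u ε z} := by
  refine LipschitzOnWith.of_le_add_mul _ fun x hx y hy => h.peakFn_le fun ε hε => ?_
  rw [NNReal.coe_div, Real.coe_toNNReal _ hκ.le]
  calc depthLog c ε (u ε x) ≤ depthLog c ε (u ε y) + |u ε y - u ε x| / κ :=
        depthLog_le_depthLog_add h.c_pos hε.1 (h.log_le_neg_one hε) hκ (hx.2 ε hε)
          (h.pos hε hy.1)
    _ ≤ peakFn c ε₀ u y + K * dist x y / κ := by
        gcongr
        · exact h.le_peakFn hε hy.1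
        · rw [← Real.dist_eq, dist_comm]
          exact (h.lipschitzOnWith ε hε).dist_le_mul x hx.1 y hy.1
    _ = peakFn c ε₀ u y + K / κ * dist x y := by ring

/-- Where some radius exceeds its depth, the radii are locally bounded below, so the family of
normalized logarithms is equi-Lipschitz. Elsewhere the value is the maximum `0`, and lower
semicontinuity suffices. -/
lemma continuousOn_peakFn (h : DepthFamily S c K ε₀ u) : ContinuousOn (peakFn c ε₀ u) S := by
  intro z hz
  by_cases hcase : ∃ ε ∈ Set.Ioo 0 ε₀, ε < u ε z
  · obtain ⟨ε, hε, hu⟩ := hcase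
    obtain ⟨κ, hκ, hev⟩ := h.exists_pos_eventually_forall_le hz hε hu
    exact ((h.lipschitzOnWith_peakFn hκ).continuousOn z
      ⟨hz, hev.self_of_nhdsWithin hz⟩).mono_of_mem_nhdsWithin
      (inter_mem self_mem_nhdsWithin hev)
  · push Not at hcase
    have hzero := h.peakFn_eq_zero hz hcase
    rw [ContinuousWithinAt, hzero, tendsto_order]
    refine ⟨fun b hb => ?_, fun b hb => ?_⟩
    · have := Set.nonempty_Ioo_subtype h.eps_pos
      obtain ⟨⟨ε, hε⟩, hlt⟩ := exists_lt_of_lt_ciSup (hb.trans_eq hzero.symm)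
      filter_upwards [(h.continuousOn_depthLog hε z hz).eventually_const_lt hlt,
        self_mem_nhdsWithin] with y hy hyS
      exact hy.trans_le (h.le_peakFn hε hyS)
    · filter_upwards [self_mem_nhdsWithin] with y hyS
      exact (h.peakFn_nonpos hyS).trans_lt hb

lemma peakFn_le_circleAverage (h : DepthFamily S c K ε₀ u) {a : X} (ha : a ∈ S) {γ : ℂ → X}
    {o : ℂ} {t : ℝ} (hγ : ContinuousOn γ (sphere o |t|)) (hγS : Set.MapsTo γ (sphere o |t|) S)
    (hmean : ∀ ε ∈ Set.Ioo 0 ε₀,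
      -Real.log (u ε a) ≤ Real.circleAverage (fun ζ => -Real.log (u ε (γ ζ))) o t) :
    peakFn c ε₀ u a ≤ Real.circleAverage (fun ζ => peakFn c ε₀ u (γ ζ)) o t := by
  refine h.peakFn_le fun ε hε => ?_
  have hpos : 0 ≤ -(Real.log ε)⁻¹ :=
    neg_nonneg.2 (inv_nonpos.2 (by linarith [h.log_le_neg_one hε]))
  have hint : CircleIntegrable (fun ζ => -Real.log (u ε (γ ζ))) o t :=
    ContinuousOn.circleIntegrable' (((h.lipschitzOnWith ε hε).continuousOn.comp hγ hγS).log
      fun ζ hζ => (h.pos hε (hγS hζ)).ne').neg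
  calc depthLog c ε (u ε a)
      = (1 - Real.log (c * ε)) / Real.log ε + -(Real.log ε)⁻¹ * -Real.log (u ε a) :=
        depthLog_eq_const_add_mul h.c_pos hε.1 (h.pos hε ha)
    _ ≤ Real.circleAverage (fun ζ => (1 - Real.log (c * ε)) / Real.log ε +
          -(Real.log ε)⁻¹ * -Real.log (u ε (γ ζ))) o t := by
        rw [circleAverage_const_add_mul hint]
        gcongr
        exact hmean ε hε
    _ ≤ Real.circleAverage (fun ζ => peakFn c ε₀ u (γ ζ)) o t := by
        refine Real.circleAverage_mono ((circleIntegrable_const _ o t).add hint.const_fun_smul)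
          (ContinuousOn.circleIntegrable' (h.continuousOn_peakFn.comp hγ hγS)) fun ζ hζ => ?_
        rw [← depthLog_eq_const_add_mul h.c_pos hε.1 (h.pos hε (hγS hζ))]
        exact h.le_peakFn hε (hγS hζ)

end DepthFamily

end PeakFunction

/-! ### Interior cones -/

section RealCone

variable {E : Type*} [NormedAddCommGroup E] [NormedSpace ℝ E]

/-- The interior cone condition for `Ω` at `p`, uniform over the points `z` of `closure Ω` near
`p`: the cone with vertex `z`, axis `-ν`, height `δ` and aperture governed by `c` lies in `Ω`. The
cone is described as the union of the balls of radius `c * ε` around `z - ε • ν`. -/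
structure InteriorConeAt (Ω : Set E) (p ν : E) (c δ : ℝ) : Prop where
  norm_eq : ‖ν‖ = 1
  c_pos : 0 < c
  delta_pos : 0 < δ
  ball_subset : ∀ z ∈ closure Ω, dist z p < δ → ∀ ε ∈ Set.Ioo 0 δ, ball (z - ε • ν) (c * ε) ⊆ Ω

lemma segment_sub_smul (z ν : E) (a b : ℝ) :
    segment ℝ (z - a • ν) (z - b • ν) = (fun s : ℝ => z - s • ν) '' Set.uIcc a b := by
  rw [← segment_eq_uIcc]
  exact (image_segment ℝ
    (AffineMap.const ℝ ℝ z - (LinearMap.toSpanSingleton ℝ E ν).toAffineMap) a b).symm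

namespace InteriorConeAt

variable {Ω : Set E} {p ν z z' : E} {c δ ε ε' : ℝ}

lemma norm_sub_smul_sub_sub_smul (h : InteriorConeAt Ω p ν c δ) (z : E) (ε ε' : ℝ) :
    ‖(z - ε' • ν) - (z - ε • ν)‖ = |ε - ε'| := by
  rw [sub_sub_sub_cancel_left, ← sub_smul, norm_smul, h.norm_eq, mul_one, Real.norm_eq_abs]

lemma norm_sub_sub_smul (h : InteriorConeAt Ω p ν c δ) (z : E) (hε : 0 ≤ ε) :
    ‖z - (z - ε • ν)‖ = ε := by
  simpa [abs_of_nonneg hε] using h.norm_sub_smul_sub_sub_smul z ε 0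

lemma sub_smul_mem (h : InteriorConeAt Ω p ν c δ) (hz : z ∈ closure Ω) (hzp : dist z p < δ)
    (hε : ε ∈ Set.Ioo 0 δ) : z - ε • ν ∈ Ω :=
  h.ball_subset z hz hzp ε hε (mem_ball_self (mul_pos h.c_pos hε.1))

lemma segment_axis_subset (h : InteriorConeAt Ω p ν c δ) (hz : z ∈ closure Ω)
    (hzp : dist z p < δ) (hε : ε ∈ Set.Ioo 0 δ) (hε' : ε' ∈ Set.Ioo 0 δ) :
    segment ℝ (z - ε • ν) (z - ε' • ν) ⊆ Ω := by
  rw [segment_sub_smul, Set.image_subset_iff]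
  exact fun s hs => h.sub_smul_mem hz hzp (Set.ordConnected_Ioo.uIcc_subset hε hε' hs)

lemma segment_vertex_subset (h : InteriorConeAt Ω p ν c δ) (hz : z ∈ Ω) (hzp : dist z p < δ)
    (hε : ε ∈ Set.Ioo 0 δ) : segment ℝ (z - ε • ν) z ⊆ Ω := by
  have hsegment := segment_sub_smul z ν ε 0
  rw [zero_smul, sub_zero, Set.uIcc_of_ge hε.1.le] at hsegment
  rw [hsegment, Set.image_subset_iff]
  rintro s ⟨hs0, hsε⟩
  rcases hs0.eq_or_lt with rfl | hs0
  · simpa using hz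
  · exact h.sub_smul_mem (subset_closure hz) hzp ⟨hs0, hsε.trans_lt hε.2⟩

lemma segment_translate_subset (h : InteriorConeAt Ω p ν c δ) (hz : z ∈ closure Ω)
    (hzp : dist z p < δ) (hε : ε ∈ Set.Ioo 0 δ) (hd : dist z' z < c * ε) :
    segment ℝ (z - ε • ν) (z' - ε • ν) ⊆ Ω := by
  refine Set.Subset.trans ?_ (h.ball_subset z hz hzp ε hε)
  refine (convex_ball _ _).segment_subset (mem_ball_self (mul_pos h.c_pos hε.1)) ?_
  rwa [mem_ball, dist_sub_right]

end InteriorConeAt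

end RealCone

section ComplexCone

variable {E : Type*} [NormedAddCommGroup E] [NormedSpace ℂ E] [FiniteDimensional ℂ E]
  {Ω : Set E} {p ν z z' : E} {c δ ε ε' η : ℝ}

namespace InteriorConeAt

lemma le_extRadius_sub_smul (h : InteriorConeAt Ω p ν c δ) (hΩ : IsOpen Ω) (hz : z ∈ closure Ω)
    (hzp : dist z p < δ) (hε : ε ∈ Set.Ioo 0 δ) (hε1 : ε ≤ 1) :
    min c 1 / (2 * Real.exp 1) * ε ≤ extRadius Ω (z - ε • ν) := by
  have hc : 0 < min c 1 := lt_min h.c_pos one_pos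
  have hε0 := hε.1
  have hlt : min c 1 * ε / 2 < c * ε := by nlinarith [min_le_left c 1]
  have hle : min c 1 * ε / 2 ≤ 1 := by nlinarith [min_le_right c 1]
  calc min c 1 / (2 * Real.exp 1) * ε = min c 1 * ε / 2 / Real.exp 1 := by ring
    _ ≤ extRadius Ω (z - ε • ν) := div_exp_one_le_extRadius hΩ (by positivity) hle
        ((closedBall_subset_ball hlt).trans (h.ball_subset z hz hzp ε hε))

lemma extRadius_sub_abs_le (h : InteriorConeAt Ω p ν c δ) (hΩ : IsOpen Ω) (hz : z ∈ closure Ω)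
    (hzp : dist z p < δ) (hε : ε ∈ Set.Ioo 0 δ) (hε' : ε' ∈ Set.Ioo 0 δ) :
    extRadius Ω (z - ε • ν) - |ε - ε'| ≤ extRadius Ω (z - ε' • ν) := by
  rw [← h.norm_sub_smul_sub_sub_smul z]
  have hseg := h.segment_axis_subset hz hzp hε hε'
  exact extRadius_sub_norm_le hΩ hseg

/-- Descend by `dist z z' / c` below the two points, move sideways inside a ball provided by the
cone condition, and climb back. -/
lemma extRadius_sub_smul_le_add (h : InteriorConeAt Ω p ν c δ) (hΩ : IsOpen Ω)
    (hz : z ∈ closure Ω) (hz' : z' ∈ closure Ω) (hzp : dist z p < δ) (hzp' : dist z' p < δ)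
    (hε : 0 < ε) (hεδ : ε + dist z z' / c < δ) :
    extRadius Ω (z - ε • ν) ≤ extRadius Ω (z' - ε • ν) + (1 + 2 / c) * dist z z' := by
  have hc := h.c_pos
  set s := dist z z' / c with hs
  have hs0 : 0 ≤ s := div_nonneg dist_nonneg hc.le
  have hcs : dist z' z < c * (ε + s) := by
    rw [mul_add, hs, mul_div_cancel₀ _ hc.ne', dist_comm]
    linarith [mul_pos hc hε]
  have hmem : ε ∈ Set.Ioo 0 δ := ⟨hε, by linarith⟩
  have hmem' : ε + s ∈ Set.Ioo 0 δ := ⟨by linarith, hεδ⟩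
  have hdown := h.extRadius_sub_abs_le hΩ hz hzp hmem hmem'
  have hside := extRadius_sub_norm_le hΩ (h.segment_translate_subset hz hzp hmem' hcs)
  have hup := h.extRadius_sub_abs_le hΩ hz' hzp' hmem' hmem
  rw [sub_add_cancel_left, abs_neg, abs_of_nonneg hs0] at hdown
  rw [← dist_eq_norm, dist_sub_right, dist_comm] at hside
  rw [add_sub_cancel_left, abs_of_nonneg hs0] at hup
  have : (1 + 2 / c) * dist z z' = dist z z' + 2 * s := by rw [hs]; ring
  linarith

lemma exists_depthFamily (h : InteriorConeAt Ω p ν c δ) (hΩ : IsOpen Ω) :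
    ∃ η > 0, η ≤ δ ∧ ∃ ε₀ ≤ δ, ∃ c' K, DepthFamily (ball p η ∩ closure Ω) c' K ε₀
      fun ε z => extRadius Ω (z - ε • ν) := by
  have hc := h.c_pos
  have hδ := h.delta_pos
  have hη : min δ (c * δ / 4) ≤ δ := min_le_left _ _
  have hε₀ : min (δ / 2) (Real.exp (-1)) ≤ δ := (min_le_left _ _).trans (half_le_self hδ.le)
  have hIoo : Set.Ioo 0 (min (δ / 2) (Real.exp (-1))) ⊆ Set.Ioo 0 δ :=
    Set.Ioo_subset_Ioo_right hε₀
  refine ⟨_, lt_min hδ (by positivity), hη, _, hε₀, min c 1 / (2 * Real.exp 1),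
    (1 + 2 / c).toNNReal, by have := lt_min hc one_pos; positivity,
    lt_min (half_pos hδ) (Real.exp_pos _), min_le_right _ _, fun ε hε z hz => ?_,
    fun ε hε => LipschitzOnWith.of_le_add_mul' _ fun z hz z' hz' => ?_,
    fun z hz => LipschitzOnWith.of_le_add fun ε hε ε' hε' => ?_⟩
  · have hε1 : ε ≤ 1 :=
      hε.2.le.trans ((min_le_right _ _).trans (Real.exp_le_one_iff.2 (by norm_num)))
    exact h.le_extRadius_sub_smul hΩ hz.2 (hz.1.trans_le hη) (hIoo hε) hε1
  · refine h.extRadius_sub_smul_le_add hΩ hz.2 hz'.2 (hz.1.trans_le hη) (hz'.1.trans_le hη)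
      hε.1 ?_
    have hdist : dist z z' / c < δ / 2 := by
      rw [div_lt_iff₀ hc]
      linarith [dist_triangle_right z z' p, mem_ball.1 hz.1, mem_ball.1 hz'.1,
        min_le_right δ (c * δ / 4)]
    linarith [hε.2.trans_le (min_le_left _ _)]
  · rw [Real.dist_eq]
    linarith [h.extRadius_sub_abs_le hΩ hz.2 (hz.1.trans_le hη) (hIoo hε) (hIoo hε')]

end InteriorConeAt

/-! ### Extension across the point -/

lemma exists_differentiableOn_union {𝕜 E F : Type*} [NontriviallyNormedField 𝕜]
    [NormedAddCommGroup E] [NormedSpace 𝕜 E] [NormedAddCommGroup F] [NormedSpace 𝕜 F]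
    {f g : E → F} {s t : Set E} (hs : IsOpen s) (ht : IsOpen t) (hf : DifferentiableOn 𝕜 f s)
    (hg : DifferentiableOn 𝕜 g t) (h : Set.EqOn f g (s ∩ t)) :
    ∃ k : E → F, DifferentiableOn 𝕜 k (s ∪ t) ∧ Set.EqOn f k s := by
  classical
  have hks := s.piecewise_eqOn f g
  have hkt : Set.EqOn (s.piecewise f g) g t := fun y hy => by
    by_cases hys : y ∈ s
    · rw [hks hys, h ⟨hys, hy⟩]
    · exact s.piecewise_eq_of_notMem f g hys
  exact ⟨s.piecewise f g, (hf.congr hks).union_of_isOpen (hg.congr hkt) hs ht, hks.symm⟩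

namespace InteriorConeAt

/-- Continue analytically from `p - ε • ν` sideways to `y - ε • ν`, then straight up to `y`. -/
lemma eqOn_taylorAt_sum (h : InteriorConeAt Ω p ν c δ) (hΩ : IsOpen Ω) (hp : p ∈ closure Ω)
    (hε : ε ∈ Set.Ioo 0 δ) {f : E → ℂ} (hf : DifferentiableOn ℂ f Ω)
    (hηδ : η ≤ δ) (hηc : η ≤ c * ε) (hη : ε + η ≤ extRadius Ω (p - ε • ν)) :
    Set.EqOn f (fun y => (taylorAt f (p - ε • ν)).sum (y - (p - ε • ν))) (Ω ∩ ball p η) := by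
  rintro y ⟨hyΩ, hy⟩
  have hpp : dist p p < δ := by simpa using h.delta_pos
  set z := p - ε • ν with hz
  have hrad := ofReal_extRadius_le hf z
  have hη0 : 0 < η := pos_of_mem_ball hy
  have hR : 0 < extRadius Ω z := by linarith [hε.1]
  have hside : y - ε • ν ∈ ball z (extRadius Ω z) := by
    rw [mem_ball, hz, dist_sub_right, ← hz]
    linarith [mem_ball.1 hy, hε.1]
  have hup : y ∈ ball z (extRadius Ω z) := by
    rw [mem_ball]
    have := h.norm_sub_sub_smul p hε.1.le
    rw [← dist_eq_norm] at this
    linarith [mem_ball.1 hy, dist_triangle y p z]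
  have hyside := taylorAt_sum_eventuallyEq_of_segment hΩ hf hR hrad
    (h.segment_translate_subset hp hpp hε (lt_of_lt_of_le hy hηc)) (mem_ball_self hR) hside
    (taylorAt_sum_eventuallyEq hΩ hf (h.sub_smul_mem hp hpp hε))
  exact (taylorAt_sum_eventuallyEq_of_segment hΩ hf hR hrad
    (h.segment_vertex_subset hyΩ (lt_of_lt_of_le hy hηδ) hε) hside hup hyside).symm.self_of_nhds

lemma exists_extension (h : InteriorConeAt Ω p ν c δ) (hΩ : IsOpen Ω) (hconn : IsConnected Ω)
    (hp : p ∈ closure Ω) (hε : ε ∈ Set.Ioo 0 δ) (hR : ε < extRadius Ω (p - ε • ν)) :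
    ∃ Ω' : Set E, IsOpen Ω' ∧ IsConnected Ω' ∧ Ω ∪ {p} ⊆ Ω' ∧
      ∀ f : E → ℂ, DifferentiableOn ℂ f Ω →
        ∃ g : E → ℂ, DifferentiableOn ℂ g Ω' ∧ Set.EqOn f g Ω := by
  have hε0 := hε.1
  obtain ⟨η, hη0, hη⟩ := exists_between
    (lt_min (sub_pos.2 hR) (lt_min (mul_pos h.c_pos hε0) h.delta_pos))
  obtain ⟨hηR, hηc, hηδ⟩ : η < extRadius Ω (p - ε • ν) - ε ∧ η < c * ε ∧ η < δ := by
    simpa only [lt_min_iff] using hη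
  have hpη : p ∈ ball p η := mem_ball_self hη0
  have hinter : (Ω ∩ ball p η).Nonempty :=
    (mem_closure_iff.1 hp _ isOpen_ball hpη).mono fun _ hy => ⟨hy.2, hy.1⟩
  have hball : ball p η ⊆ ball (p - ε • ν) (extRadius Ω (p - ε • ν)) := by
    apply ball_subset_ball'
    rw [dist_eq_norm, h.norm_sub_sub_smul p hε0.le]
    linarith
  refine ⟨Ω ∪ ball p η, hΩ.union isOpen_ball,
    hconn.union hinter ⟨⟨p, hpη⟩, (convex_ball p η).isPreconnected⟩,
    Set.union_subset_union_right _ (Set.singleton_subset_iff.2 hpη), fun f hf => ?_⟩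
  exact exists_differentiableOn_union hΩ isOpen_ball hf
    ((analyticOnNhd_taylorAt_sum (hε0.trans hR) (ofReal_extRadius_le hf _)).mono
      hball).differentiableOn
    (h.eqOn_taylorAt_sum hΩ hp hε hf hηδ.le hηc.le (by linarith))

end InteriorConeAt

/-! ### Plurisubharmonic peak functions -/

/-- `PlurisubharmonicOn` for functions on an arbitrary complex normed space, with the integrals
expressed as circle averages. -/
def IsPlurisubharmonicOn {E : Type*} [NormedAddCommGroup E] [NormedSpace ℂ E] (ρ : E → ℝ)
    (W : Set E) : Prop :=
  UpperSemicontinuousOn ρ W ∧ ∀ a ∈ W, ∀ w : E, ∀ᶠ t : ℝ in 𝓝[>] 0,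
    ρ a ≤ Real.circleAverage (fun ζ => ρ (a + ζ • w)) 0 t

lemma isPlurisubharmonicOn_iff {m : ℕ} {ρ : EuclideanSpace ℂ (Fin m) → ℝ}
    {W : Set (EuclideanSpace ℂ (Fin m))} :
    IsPlurisubharmonicOn ρ W ↔ PlurisubharmonicOn ρ W := by
  simp only [IsPlurisubharmonicOn, PlurisubharmonicOn, (nhdsGT_basis (0 : ℝ)).eventually_iff,
    Set.mem_Ioo, and_imp, Real.circleAverage, circleMap_zero, smul_eq_mul, one_div, gt_iff_lt]

lemma eventually_forall_closedBall_add_smul_mem {E : Type*} [NormedAddCommGroup E]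
    [NormedSpace ℂ E] {V : Set E} (hV : IsOpen V) {a : E} (ha : a ∈ V) (w : E) :
    ∀ᶠ t : ℝ in 𝓝[>] 0, ∀ ζ ∈ closedBall (0 : ℂ) t, a + ζ • w ∈ V := by
  have hline : ∀ᶠ ζ : ℂ in 𝓝 0, a + ζ • w ∈ V :=
    (by fun_prop : Continuous fun ζ : ℂ => a + ζ • w).continuousAt.eventually_mem
      (hV.mem_nhds (by simpa using ha))
  obtain ⟨T, hT, hball⟩ := Metric.eventually_nhds_iff_ball.1 hline
  filter_upwards [Ioo_mem_nhdsGT hT] with t ht ζ hζ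
  exact hball ζ (closedBall_subset_ball ht.2 hζ)

namespace InteriorConeAt

lemma isPlurisubharmonicOn_peakFn (h : InteriorConeAt Ω p ν c δ) (hΩ : IsOpen Ω) (hη : η ≤ δ)
    {ε₀ c' : ℝ} {K : NNReal} (hε₀ : ε₀ ≤ δ) (hF : DepthFamily (ball p η ∩ closure Ω) c' K ε₀
      fun ε z => extRadius Ω (z - ε • ν)) :
    IsPlurisubharmonicOn (peakFn c' ε₀ fun ε z => extRadius Ω (z - ε • ν)) (ball p η ∩ Ω) := by
  have hsub : ball p η ∩ Ω ⊆ ball p η ∩ closure Ω := Set.inter_subset_inter_right _ subset_closure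
  refine ⟨(hF.continuousOn_peakFn.mono hsub).upperSemicontinuousOn, fun a ha w => ?_⟩
  filter_upwards [eventually_forall_closedBall_add_smul_mem (isOpen_ball.inter hΩ) ha w,
    self_mem_nhdsWithin] with t hdisc (ht : 0 < t)
  have hcircle : sphere (0 : ℂ) |t| ⊆ closedBall 0 t := by
    rw [abs_of_pos ht]; exact sphere_subset_closedBall
  refine hF.peakFn_le_circleAverage (γ := fun ζ => a + ζ • w) (hsub ha) (by fun_prop)
    (fun ζ hζ => hsub (hdisc ζ (hcircle hζ))) fun ε hε => ?_
  have hcomm : ∀ ζ : ℂ, a - ε • ν + ζ • w = a + ζ • w - ε • ν := fun ζ => by abel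
  have hmean := neg_log_extRadius_le_circleAverage hΩ (a := a - ε • ν) (w := w) ht fun ζ hζ => by
    rw [hcomm]
    exact h.sub_smul_mem (hsub (hdisc ζ hζ)).2 (lt_of_lt_of_le (hdisc ζ hζ).1 hη)
      ⟨hε.1, hε.2.trans_le hε₀⟩
  simpa only [hcomm] using hmean

lemma exists_lt_extRadius_sub_smul (h : InteriorConeAt Ω p ν c δ) (hΩ : IsOpen Ω) (hz : z ∈ Ω)
    (hzp : dist z p < δ) {ε₀ : ℝ} (hε₀ : 0 < ε₀) (hε₀δ : ε₀ ≤ δ) :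
    ∃ ε ∈ Set.Ioo 0 ε₀, ε < extRadius Ω (z - ε • ν) := by
  obtain ⟨ε, hε, hlt⟩ := exists_between (lt_min hε₀ (half_pos (extRadius_pos hΩ hz)))
  refine ⟨ε, ⟨hε, hlt.trans_le (min_le_left _ _)⟩, ?_⟩
  have hlt' := hlt.trans_le (min_le_right _ _)
  have hseg := h.segment_vertex_subset hz hzp
    ⟨hε, hlt.trans_le ((min_le_left _ _).trans hε₀δ)⟩
  have hsub := extRadius_sub_norm_le hΩ (segment_symm ℝ z (z - ε • ν) ▸ hseg)
  rw [norm_sub_rev, h.norm_sub_sub_smul z hε.le] at hsub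
  linarith

lemma exists_peak (h : InteriorConeAt Ω p ν c δ) (hΩ : IsOpen Ω) (hp : p ∈ closure Ω)
    (hR : ∀ ε ∈ Set.Ioo 0 δ, extRadius Ω (p - ε • ν) ≤ ε) :
    ∃ (U : Set E) (ρ : E → ℝ), IsOpen U ∧ p ∈ U ∧ ContinuousOn ρ (U ∩ closure Ω) ∧
      (∀ z ∈ U ∩ Ω, ρ z < 0) ∧ IsPlurisubharmonicOn ρ (U ∩ Ω) ∧ ρ p = 0 := by
  obtain ⟨η, hη0, hη, ε₀, hε₀, c', K, hF⟩ := h.exists_depthFamily hΩ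
  have hpη : p ∈ ball p η := mem_ball_self hη0
  refine ⟨ball p η, peakFn c' ε₀ fun ε z => extRadius Ω (z - ε • ν), isOpen_ball, hpη,
    hF.continuousOn_peakFn, fun z hz => ?_, h.isPlurisubharmonicOn_peakFn hΩ hη hε₀ hF,
    hF.peakFn_eq_zero ⟨hpη, hp⟩ fun ε hε => hR ε (Set.Ioo_subset_Ioo_right hε₀ hε)⟩
  obtain ⟨ε, hε, hlt⟩ :=
    h.exists_lt_extRadius_sub_smul hΩ hz.2 (lt_of_lt_of_le hz.1 hη) hF.eps_pos hε₀
  exact hF.peakFn_neg ⟨hz.1, subset_closure hz.2⟩ hε hlt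

end InteriorConeAt

theorem boundary_point_envelope_or_peak_general (hΩ : IsOpen Ω) (hconn : IsConnected Ω)
    (hp : p ∈ closure Ω) (hcone : InteriorConeAt Ω p ν c δ) :
    (∃ Ω' : Set E, IsOpen Ω' ∧ IsConnected Ω' ∧ Ω ∪ {p} ⊆ Ω' ∧
        ∀ f : E → ℂ, DifferentiableOn ℂ f Ω →
          ∃ g : E → ℂ, DifferentiableOn ℂ g Ω' ∧ Set.EqOn f g Ω) ∨
    (∃ (U : Set E) (ρ : E → ℝ), IsOpen U ∧ p ∈ U ∧ ContinuousOn ρ (U ∩ closure Ω) ∧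
        (∀ z ∈ U ∩ Ω, ρ z < 0) ∧ IsPlurisubharmonicOn ρ (U ∩ Ω) ∧ ρ p = 0) := by
  by_cases hR : ∃ ε ∈ Set.Ioo 0 δ, ε < extRadius Ω (p - ε • ν)
  · obtain ⟨ε, hε, hlt⟩ := hR
    exact Or.inl (hcone.exists_extension hΩ hconn hp hε hlt)
  · push Not at hR
    exact Or.inr (hcone.exists_peak hΩ hp hR)

end ComplexCone

/-! ### Lipschitz domains -/

lemma exists_interiorConeAt_of_sublevel {E : Type*} [NormedAddCommGroup E] [NormedSpace ℝ E]
    {Ω W : Set E} {p ν : E} {φ : E → ℝ} {K : NNReal} (hK : 0 < K) (hφ : LipschitzWith K φ)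
    (hν : ‖ν‖ = 1) (hφν : ∀ z, ∀ ε > 0, φ (z - ε • ν) ≤ φ z - ε) (hW : IsOpen W) (hp : p ∈ W)
    (hmem : ∀ z ∈ W, z ∈ Ω ↔ φ z < 0) : ∃ δ, InteriorConeAt Ω p ν (K : ℝ)⁻¹ δ := by
  have hK' : (0 : ℝ) < K := hK
  obtain ⟨η, hη, hball⟩ := Metric.isOpen_iff.1 hW p hp
  have hclosure : ∀ z ∈ closure Ω, z ∈ W → φ z ≤ 0 := fun z hz hzW =>
    closure_minimal (fun y hy => ((hmem y hy.1).1 hy.2).le)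
      (isClosed_le hφ.continuous continuous_const) (hW.inter_closure ⟨hzW, hz⟩)
  refine ⟨η / (2 + (K : ℝ)⁻¹), hν, by positivity, by positivity, fun z hz hzp ε hε y hy => ?_⟩
  rw [mem_ball] at hy
  rw [lt_div_iff₀ (by positivity)] at hzp
  have hεη := (lt_div_iff₀ (by positivity)).1 hε.2
  have hK0 : (0 : ℝ) < (K : ℝ)⁻¹ := by positivity
  have hzW : z ∈ W := hball (by rw [mem_ball]; nlinarith [dist_nonneg (x := z) (y := p)])
  have hzε : dist (z - ε • ν) z = ε := by
    rw [dist_eq_norm, sub_sub_cancel_left, norm_neg, norm_smul, hν, Real.norm_of_nonneg hε.1.le,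
      mul_one]
  have hyW : y ∈ W := hball (by
    rw [mem_ball]
    nlinarith [dist_triangle y (z - ε • ν) z, dist_triangle y z p, dist_nonneg (x := z) (y := p)])
  rw [hmem y hyW]
  calc φ y ≤ φ (z - ε • ν) + K * dist y (z - ε • ν) := hφ.le_add_mul _ _
    _ < (φ z - ε) + ε := add_lt_add_of_le_of_lt (hφν z ε hε.1) ((lt_inv_mul_iff₀ hK').1 hy)
    _ ≤ 0 := by linarith [hclosure z hz hzW]

lemma HasLipschitzBoundary.exists_interiorConeAt {m : ℕ} {Ω : Set (EuclideanSpace ℂ (Fin m))}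
    (hlip : HasLipschitzBoundary Ω) {p : EuclideanSpace ℂ (Fin m)} (hp : p ∈ frontier Ω) :
    ∃ ν c δ, InteriorConeAt Ω p ν c δ := by
  obtain ⟨A, b, C, r, i, W, hW, hpW, hr, hinv, hmem⟩ := hlip p hp
  set e : EuclideanSpace ℂ (Fin m) := EuclideanSpace.single i Complex.I with he
  have hchart : LipschitzWith 1 fun z => A z + b :=
    LipschitzWith.mk_one fun z w => by simp
  have him : LipschitzWith 1 fun z : EuclideanSpace ℂ (Fin m) => (z i).im :=
    LipschitzWith.mk_one fun z w => by
      rw [Real.dist_eq, dist_eq_norm, ← Complex.sub_im]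
      exact (Complex.abs_im_le_norm _).trans (PiLp.norm_apply_le (z - w) i)
  have hφ : LipschitzWith (1 * 1 + C * 1) fun z => ((A z + b) i).im - r (A z + b) :=
    (him.comp hchart).sub (hr.comp hchart)
  have hshift : ∀ z (ε : ℝ), A (z - ε • A.symm e) + b = (A z + b) - (ε : ℂ) • e := by
    intro z ε
    rw [← Complex.coe_smul, map_sub, map_smul, LinearIsometryEquiv.apply_symm_apply]
    abel
  refine ⟨A.symm e, _, exists_interiorConeAt_of_sublevel (by positivity) hφ (by simp [he])
    (fun z ε _ => ?_) hW hpW fun z hz => (hmem z hz).trans sub_neg.symm⟩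
  have hr_shift : r (A z + b - (ε : ℂ) • e) = r (A z + b) :=
    hinv _ _ (fun j hj => by simp [he, hj]) (by simp [he])
  rw [hshift, hr_shift]
  simp [he, sub_right_comm]

/-- **Theorem 1.3.** For a bounded domain `Ω ⊆ ℂ^m` with Lipschitz boundary and a boundary
point `p`, either `p` lies in the (schlicht part of the) envelope of holomorphy of `Ω`, or
`p` lies in a local peak set for plurisubharmonic functions. -/
theorem boundary_point_envelope_or_peak {m : ℕ} (Ω : Set (EuclideanSpace ℂ (Fin m)))
    (hΩopen : IsOpen Ω) (hΩconn : IsConnected Ω) (hΩbdd : Bornology.IsBounded Ω)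
    (hΩlip : HasLipschitzBoundary Ω)
    (p : EuclideanSpace ℂ (Fin m)) (hp : p ∈ frontier Ω) :
    (∃ Ω' : Set (EuclideanSpace ℂ (Fin m)), IsOpen Ω' ∧ IsConnected Ω' ∧
        Ω ∪ {p} ⊆ Ω' ∧
        ∀ f : EuclideanSpace ℂ (Fin m) → ℂ, DifferentiableOn ℂ f Ω →
          ∃ g : EuclideanSpace ℂ (Fin m) → ℂ, DifferentiableOn ℂ g Ω' ∧ Set.EqOn f g Ω) ∨
    (∃ (U : Set (EuclideanSpace ℂ (Fin m))) (ρ : EuclideanSpace ℂ (Fin m) → ℝ),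
        IsOpen U ∧ p ∈ U ∧ ContinuousOn ρ (U ∩ closure Ω) ∧
        (∀ z ∈ U ∩ Ω, ρ z < 0) ∧ PlurisubharmonicOn ρ (U ∩ Ω) ∧ ρ p = 0) := by
  obtain ⟨ν, c, δ, hcone⟩ := hΩlip.exists_interiorConeAt hp
  simpa only [isPlurisubharmonicOn_iff] using
    boundary_point_envelope_or_peak_general hΩopen hΩconn (frontier_subset_closure hp) hcone
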